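/- arXiv:1608.04726 — 8 statements merged into one kernel-verified Lean document; each statement's English description precedes it below -/
import Mathlib

section
/- Fix q ∈ (0,1). There exists a constant C > 0, depending only on q, with the following property. Let T ≥ 2 be an integer, ω = 1 − T^{−10}, J ∈ ℤ, m, s ∈ ℝ, ε ∈ (0,1), and set X_T = J − mT + sT^{1/3}. If |X_T| < T^5, then | (H_{ω;T}(m, s+ε; J) − H_{ω;T}(m, s; J))/ε − 1_{X_T ≥ 0} − (1 + X_T/(εT^{1/3}))·1_{X_T ∈ (−εT^{1/3}, 0)} | ≤ C/(ε T^{1/3}). (Second assertion of Proposition 5.1.) -/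
/-!
Put `X = J - mT + sT^{1/3}`, `δ = 1 - ω = T^{-10}` and
`F(X) = (qω;q)_∞ Σ_M ω^M / (q;q)_M · g(X - M)`, where `g(y) = 1 / (-q^y;q)_∞`. Then
`H(m,s;J) = F(X) / T^{1/3}` and `H(m,s+ε;J) = F(X + εT^{1/3}) / T^{1/3}`, while the two indicator
terms add up to `(max(X + εT^{1/3}, 0) - max(X, 0)) / (εT^{1/3})`. So it is enough to prove
`F(X) = max(X, 0) + O(1)` uniformly over `X ≤ 2T^5` (`abs_series_sub_max_le`).

The function `g` is a smoothed indicator of `y ≥ 0`, with exponentially small errors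
(`qPochInf_inv_bounds`): `1 - g(y) ≤ q^y / (1-q)` and `g(y) ≤ q^{-y}`. The weight
`a_M = (qω;q)_∞ ω^M / (q;q)_M` satisfies `|a_M - 1| ≲ δ(M+1) + q^M` (`abs_weight_sub_one_le`).
Hence, with `N = ⌈X⌉₊`, the terms `M ≥ N` contribute `O(1)`, and those with `M < N` contribute
`N + O(δN² + 1)`. As `N = O(T^5)` and `δ = T^{-10}`, the product `δN²` is bounded.
-/

open Real

/-- The infinite `q`-Pochhammer symbol `(z;q)_∞ = ∏_{n=0}^∞ (1 - z q^n)`. -/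
noncomputable def qPochInf (q z : ℝ) : ℝ := ∏' n : ℕ, (1 - z * q ^ n)

/-- The finite `q`-Pochhammer symbol `(q;q)_M = ∏_{n=1}^M (1 - q^n)`. -/
noncomputable def qPochFin (q : ℝ) (M : ℕ) : ℝ := ∏ n ∈ Finset.Icc 1 M, (1 - q ^ n)

/-- `H_{ω;T}(m,s;J) = ((qω;q)_∞ / T^{1/3}) · Σ_{M=0}^∞ (ω^M/(q;q)_M) ·
(−q^{sT^{1/3} − mT + J − M};q)_∞^{−1}` with `ω = 1 - T^{-10}`. -/
noncomputable def Hfun (q : ℝ) (T : ℕ) (m s : ℝ) (J : ℤ) : ℝ :=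
  (qPochInf q (q * (1 - (T : ℝ) ^ (-10 : ℝ))) / (T : ℝ) ^ ((1 : ℝ) / 3)) *
    ∑' M : ℕ, ((1 - (T : ℝ) ^ (-10 : ℝ)) ^ M / qPochFin q M) *
      (qPochInf q (-(q ^ (s * (T : ℝ) ^ ((1 : ℝ) / 3) - m * T + (J : ℝ) - (M : ℝ)))))⁻¹

open Filter Topology

/-! ### Finite and infinite `q`-products -/

section Products

variable {q : ℝ}

lemma tendsto_qPochInf (h0 : 0 < q) (h1 : q < 1) (z : ℝ) :
    Tendsto (fun k => ∏ n ∈ Finset.range k, (1 - z * q ^ n)) atTop (𝓝 (qPochInf q z)) := by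
  have hs : Summable (fun n : ℕ => -(z * q ^ n)) :=
    ((summable_geometric_of_lt_one h0.le h1).mul_left z).neg
  have hm : Multipliable (fun n : ℕ => 1 + -(z * q ^ n)) := by
    refine multipliable_one_add_of_summable ?_
    simpa using hs.norm
  have := hm.hasProd.tendsto_prod_nat
  simpa only [← sub_eq_add_neg, qPochInf] using this

lemma sum_geom_le (h0 : 0 < q) (h1 : q < 1) (k : ℕ) :
    ∑ n ∈ Finset.range k, q ^ n ≤ (1 - q)⁻¹ := by
  rw [← tsum_geometric_of_lt_one h0.le h1]
  exact (summable_geometric_of_lt_one h0.le h1).sum_le_tsum _ (fun i _ => by positivity)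

lemma qPochFin_eq (M : ℕ) : qPochFin q M = ∏ n ∈ Finset.range M, (1 - q * q ^ n) := by
  unfold qPochFin
  induction M with
  | zero => simp
  | succ M ih =>
    rw [Finset.prod_Icc_succ_top (by omega), ih, Finset.prod_range_succ, pow_succ']

/-- The finite products `(q;q)_M` are bounded below uniformly in `M`: each factor satisfies
`1/(1-x) = 1 + x/(1-x) ≤ exp(x/(1-x))`. -/
lemma exp_le_qPochFin (h0 : 0 < q) (h1 : q < 1) (M : ℕ) :
    rexp (-((1 - q)⁻¹ * (1 - q)⁻¹)) ≤ qPochFin q M := by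
  have hS : 0 < (1 - q)⁻¹ := inv_pos.2 (by linarith)
  rw [qPochFin_eq]
  calc rexp (-((1 - q)⁻¹ * (1 - q)⁻¹))
      ≤ rexp (∑ n ∈ Finset.range M, -((1 - q)⁻¹ * q ^ n)) := by
        rw [Finset.sum_neg_distrib, ← Finset.mul_sum]
        gcongr
        exact sum_geom_le h0 h1 M
    _ = ∏ n ∈ Finset.range M, rexp (-((1 - q)⁻¹ * q ^ n)) := Real.exp_sum _ _
    _ ≤ ∏ n ∈ Finset.range M, (1 - q * q ^ n) := by
        refine Finset.prod_le_prod (fun _ _ => (Real.exp_pos _).le) (fun n _ => ?_)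
        have hn0 : 0 < q ^ n := by positivity
        have hn1 : q ^ n ≤ 1 := pow_le_one₀ h0.le h1.le
        have hx : q * q ^ n ≤ q := by nlinarith
        have hp : 0 < 1 - q * q ^ n := by linarith
        rw [Real.exp_neg]
        refine inv_le_of_inv_le₀ hp ?_
        refine le_trans ?_ (Real.add_one_le_exp _)
        rw [inv_le_iff_one_le_mul₀ hp]
        have e : (1 - q) * (1 - q)⁻¹ = 1 := mul_inv_cancel₀ (by linarith)
        have h2 : 1 ≤ (1 - q)⁻¹ * (1 - q * q ^ n) := by
          have : 0 ≤ (1 - q)⁻¹ * (q - q * q ^ n) := mul_nonneg hS.le (by linarith)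
          linarith
        nlinarith

lemma prod_mem_unit (h0 : 0 < q) (h1 : q < 1) {z : ℝ} (hz0 : 0 ≤ z) (hz1 : z ≤ 1) (k : ℕ) :
    0 ≤ ∏ n ∈ Finset.range k, (1 - z * q ^ n) ∧ ∏ n ∈ Finset.range k, (1 - z * q ^ n) ≤ 1 := by
  have h (n : ℕ) : 0 ≤ z * q ^ n ∧ z * q ^ n ≤ 1 :=
    ⟨by positivity, mul_le_one₀ hz1 (by positivity) (pow_le_one₀ h0.le h1.le)⟩
  exact ⟨Finset.prod_nonneg fun n _ => by linarith [(h n).2],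
    Finset.prod_le_one (fun n _ => by linarith [(h n).2]) fun n _ => by linarith [(h n).1]⟩

lemma qPochInf_mem_unit (h0 : 0 < q) (h1 : q < 1) {z : ℝ} (hz0 : 0 ≤ z) (hz1 : z ≤ 1) :
    0 ≤ qPochInf q z ∧ qPochInf q z ≤ 1 :=
  ⟨ge_of_tendsto' (tendsto_qPochInf h0 h1 z) fun k => (prod_mem_unit h0 h1 hz0 hz1 k).1,
    le_of_tendsto' (tendsto_qPochInf h0 h1 z) fun k => (prod_mem_unit h0 h1 hz0 hz1 k).2⟩

/-- Replacing `q` by `q * (1 - δ)` in the first argument of a partial product changes it by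
`O(δ)`, uniformly in the number of factors. -/
lemma abs_prod_sub_prod_le (h0 : 0 < q) (h1 : q < 1) {δ : ℝ} (hδ0 : 0 ≤ δ) (hδ1 : δ ≤ 1) (M : ℕ) :
    |∏ n ∈ Finset.range M, (1 - q * (1 - δ) * q ^ n) - ∏ n ∈ Finset.range M, (1 - q * q ^ n)|
      ≤ δ * ∑ n ∈ Finset.range M, q ^ n := by
  induction M with
  | zero => simp
  | succ M ih =>
    rw [Finset.prod_range_succ, Finset.prod_range_succ, Finset.sum_range_succ]
    obtain ⟨a0, a1⟩ := prod_mem_unit h0 h1 (z := q * (1 - δ))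
      (mul_nonneg h0.le (by linarith)) (by nlinarith) M
    set A := ∏ n ∈ Finset.range M, (1 - q * (1 - δ) * q ^ n)
    set B := ∏ n ∈ Finset.range M, (1 - q * q ^ n)
    have hq0 : 0 < q ^ M := by positivity
    have hq1 : q ^ M ≤ 1 := pow_le_one₀ h0.le h1.le
    have e : A * (1 - q * (1 - δ) * q ^ M) - B * (1 - q * q ^ M)
        = (A - B) * (1 - q * q ^ M) + A * (q * (δ * q ^ M)) := by ring
    have hx0 : 0 ≤ 1 - q * q ^ M := by nlinarith
    have hx1 : 1 - q * q ^ M ≤ 1 := by nlinarith [mul_pos h0 hq0]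
    have hd : 0 ≤ δ * q ^ M := by positivity
    rw [e, mul_add]
    refine (abs_add_le _ _).trans (add_le_add ?_ ?_)
    · rw [abs_mul, abs_of_nonneg hx0]
      exact (mul_le_of_le_one_right (abs_nonneg _) hx1).trans ih
    · rw [abs_of_nonneg (by positivity)]
      have : q * (δ * q ^ M) ≤ δ * q ^ M := mul_le_of_le_one_left hd h1.le
      exact (mul_le_of_le_one_left (by positivity) a1).trans this

/-- Adding factors to a partial product changes it by at most a geometric tail. -/
lemma abs_prod_add_sub_prod_le (h0 : 0 < q) (h1 : q < 1) {z : ℝ} (hz0 : 0 ≤ z) (hz1 : z ≤ 1)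
    (M k : ℕ) :
    |∏ n ∈ Finset.range (M + k), (1 - z * q ^ n) - ∏ n ∈ Finset.range M, (1 - z * q ^ n)|
      ≤ q ^ M * ∑ n ∈ Finset.range k, q ^ n := by
  induction k with
  | zero => simp
  | succ k ih =>
    rw [← add_assoc, Finset.prod_range_succ, Finset.sum_range_succ, mul_add, ← pow_add]
    obtain ⟨a0, a1⟩ := prod_mem_unit h0 h1 hz0 hz1 (M + k)
    set A := ∏ n ∈ Finset.range (M + k), (1 - z * q ^ n)
    set B := ∏ n ∈ Finset.range M, (1 - z * q ^ n)
    have e : A * (1 - z * q ^ (M + k)) - B = (A - B) + -(A * (z * q ^ (M + k))) := by ring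
    rw [e]
    refine (abs_add_le _ _).trans (add_le_add ih ?_)
    rw [abs_neg, abs_of_nonneg (by positivity)]
    have : z * q ^ (M + k) ≤ q ^ (M + k) := mul_le_of_le_one_left (by positivity) hz1
    exact (mul_le_of_le_one_left (by positivity) a1).trans this

lemma abs_qPochInf_sub_qPochFin_le (h0 : 0 < q) (h1 : q < 1) {δ : ℝ} (hδ0 : 0 ≤ δ) (hδ1 : δ ≤ 1)
    (M : ℕ) :
    |qPochInf q (q * (1 - δ)) - qPochFin q M| ≤ (δ + q ^ M) * (1 - q)⁻¹ := by
  have hz0 : 0 ≤ q * (1 - δ) := mul_nonneg h0.le (by linarith)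
  have hz1 : q * (1 - δ) ≤ 1 := by nlinarith
  have ht : Tendsto (fun k => |∏ n ∈ Finset.range (M + k), (1 - q * (1 - δ) * q ^ n)
      - qPochFin q M|) atTop (𝓝 |qPochInf q (q * (1 - δ)) - qPochFin q M|) := by
    refine Tendsto.abs (Tendsto.sub_const ?_ _)
    simpa only [add_comm, Function.comp_def] using
      (tendsto_qPochInf h0 h1 (q * (1 - δ))).comp (tendsto_add_atTop_nat M)
  refine le_of_tendsto' ht fun k => ?_
  rw [qPochFin_eq, add_comm δ, add_mul]
  refine (abs_sub_le _ (∏ n ∈ Finset.range M, (1 - q * (1 - δ) * q ^ n)) _).trans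
    (add_le_add ?_ ?_)
  · refine (abs_prod_add_sub_prod_le h0 h1 hz0 hz1 M k).trans ?_
    gcongr
    exact sum_geom_le h0 h1 k
  · refine (abs_prod_sub_prod_le h0 h1 hδ0 hδ1 M).trans ?_
    gcongr
    exact sum_geom_le h0 h1 M

/-! ### The weights and the smoothed indicator -/

/-- The weights `(qω;q)_∞ ω^M / (q;q)_M` are close to `1`, where `ω = 1 - δ`. -/
lemma abs_weight_sub_one_le (h0 : 0 < q) (h1 : q < 1) {δ : ℝ} (hδ0 : 0 ≤ δ) (hδ1 : δ ≤ 1)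
    (M : ℕ) :
    |qPochInf q (q * (1 - δ)) * ((1 - δ) ^ M / qPochFin q M) - 1|
      ≤ rexp ((1 - q)⁻¹ * (1 - q)⁻¹) * (M * δ + (δ + q ^ M) * (1 - q)⁻¹) := by
  have hS : 0 < (1 - q)⁻¹ := inv_pos.2 (by linarith)
  have hP := exp_le_qPochFin h0 h1 M
  have hPpos : 0 < qPochFin q M := (Real.exp_pos _).trans_le hP
  obtain ⟨b0, b1⟩ := qPochInf_mem_unit h0 h1 (z := q * (1 - δ))
    (mul_nonneg h0.le (by linarith)) (by nlinarith)
  have hd := abs_qPochInf_sub_qPochFin_le h0 h1 hδ0 hδ1 M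
  have hB : 1 - M * δ ≤ (1 - δ) ^ M := by
    have := one_add_mul_le_pow (a := -δ) (by linarith) M
    rw [← sub_eq_add_neg] at this
    linarith
  have hw : (1 - δ) ^ M ≤ 1 := pow_le_one₀ (by linarith) (by linarith)
  set P := qPochFin q M
  set W := qPochInf q (q * (1 - δ))
  have e : W * ((1 - δ) ^ M / P) - 1 = P⁻¹ * (((W - P)) + -(W * (1 - (1 - δ) ^ M))) := by
    field_simp
    ring
  have hPi : P⁻¹ ≤ rexp ((1 - q)⁻¹ * (1 - q)⁻¹) := by
    rw [Real.exp_neg] at hP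
    exact inv_le_of_inv_le₀ (Real.exp_pos _) hP
  rw [e, abs_mul, abs_of_pos (inv_pos.2 hPpos)]
  have h2 : |W - P + -(W * (1 - (1 - δ) ^ M))| ≤ M * δ + (δ + q ^ M) * (1 - q)⁻¹ := by
    refine (abs_add_le _ _).trans ?_
    rw [abs_neg, abs_of_nonneg (mul_nonneg b0 (by linarith))]
    have : W * (1 - (1 - δ) ^ M) ≤ 1 - (1 - δ) ^ M := mul_le_of_le_one_left (by linarith) b1
    linarith
  gcongr

lemma weight_mem (h0 : 0 < q) (h1 : q < 1) {δ : ℝ} (hδ0 : 0 ≤ δ) (hδ1 : δ ≤ 1) (M : ℕ) :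
    0 ≤ qPochInf q (q * (1 - δ)) * ((1 - δ) ^ M / qPochFin q M) ∧
    qPochInf q (q * (1 - δ)) * ((1 - δ) ^ M / qPochFin q M)
      ≤ rexp ((1 - q)⁻¹ * (1 - q)⁻¹) := by
  have hP := exp_le_qPochFin h0 h1 M
  have hPpos : 0 < qPochFin q M := (Real.exp_pos _).trans_le hP
  obtain ⟨b0, b1⟩ := qPochInf_mem_unit h0 h1 (z := q * (1 - δ))
    (mul_nonneg h0.le (by linarith)) (by nlinarith)
  have hw : (1 - δ) ^ M ≤ 1 := pow_le_one₀ (by linarith) (by linarith)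
  have hw0 : 0 ≤ (1 - δ) ^ M := pow_nonneg (by linarith) M
  have hPi : (qPochFin q M)⁻¹ ≤ rexp ((1 - q)⁻¹ * (1 - q)⁻¹) := by
    rw [Real.exp_neg] at hP
    exact inv_le_of_inv_le₀ (Real.exp_pos _) hP
  refine ⟨by positivity, ?_⟩
  rw [div_eq_mul_inv]
  have h2 : (1 - δ) ^ M * (qPochFin q M)⁻¹ ≤ (qPochFin q M)⁻¹ :=
    mul_le_of_le_one_left (by positivity) hw
  exact (mul_le_of_le_one_left (by positivity) b1).trans (h2.trans hPi)

/-- For `x = q^y` these bounds say that `1 / (-q^y;q)_∞` is close to the indicator of `y ≥ 0`. -/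
lemma qPochInf_inv_bounds (h0 : 0 < q) (h1 : q < 1) {x : ℝ} (hx : 0 < x) :
    0 ≤ (qPochInf q (-x))⁻¹ ∧ (qPochInf q (-x))⁻¹ ≤ 1 ∧ (qPochInf q (-x))⁻¹ ≤ x⁻¹ ∧
      1 - (qPochInf q (-x))⁻¹ ≤ x * (1 - q)⁻¹ := by
  have ht := tendsto_qPochInf h0 h1 (-x)
  have hlow : 1 + x ≤ qPochInf q (-x) := by
    refine ge_of_tendsto' (ht.comp (tendsto_add_atTop_nat 1)) fun k => ?_
    rw [Function.comp, Finset.prod_range_succ']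
    have : 1 ≤ ∏ n ∈ Finset.range k, (1 - -x * q ^ (n + 1)) := by
      refine le_of_eq_of_le (Finset.prod_const_one (s := Finset.range k)).symm
        (Finset.prod_le_prod (fun _ _ => zero_le_one) fun n _ => ?_)
      have : 0 < x * q ^ (n + 1) := by positivity
      linarith
    simp only [pow_zero, mul_one, sub_neg_eq_add]
    nlinarith
  have hup : qPochInf q (-x) ≤ rexp (x * (1 - q)⁻¹) := by
    refine le_of_tendsto' ht fun k => ?_
    calc ∏ n ∈ Finset.range k, (1 - -x * q ^ n)
        ≤ ∏ n ∈ Finset.range k, rexp (x * q ^ n) := by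
          refine Finset.prod_le_prod (fun n _ => ?_) (fun n _ => ?_)
          · have : 0 < x * q ^ n := by positivity
            linarith
          · linarith [Real.add_one_le_exp (x * q ^ n)]
      _ = rexp (x * ∑ n ∈ Finset.range k, q ^ n) := by
          rw [← Real.exp_sum, Finset.mul_sum]
      _ ≤ _ := by
          gcongr
          exact sum_geom_le h0 h1 k
  have hpos : 0 < qPochInf q (-x) := by linarith
  refine ⟨by positivity, inv_le_one_of_one_le₀ (by linarith),
    inv_anti₀ hx (by linarith), ?_⟩
  have h3 := inv_anti₀ hpos hup
  rw [← Real.exp_neg] at h3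
  linarith [Real.add_one_le_exp (-(x * (1 - q)⁻¹))]

end Products

/-! ### Asymptotics of the series -/

/-- The series is `max X 0 + O(1)`, as long as `δ ⌈X⌉₊²` is bounded. -/
lemma abs_series_sub_max_le {q : ℝ} (h0 : 0 < q) (h1 : q < 1) {δ : ℝ} (hδ0 : 0 ≤ δ) (hδ1 : δ ≤ 1)
    (X : ℝ) (hX : (⌈X⌉₊ : ℝ) ^ 2 * δ ≤ 9) :
    |qPochInf q (q * (1 - δ)) * ∑' M : ℕ, ((1 - δ) ^ M / qPochFin q M) *
        (qPochInf q (-(q ^ (X - (M : ℝ)))))⁻¹ - max X 0|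
      ≤ rexp ((1 - q)⁻¹ * (1 - q)⁻¹) * (9 + 9 * (1 - q)⁻¹ + (1 - q)⁻¹ * (1 - q)⁻¹)
        + (1 - q)⁻¹ * (1 - q)⁻¹ + rexp ((1 - q)⁻¹ * (1 - q)⁻¹) * (1 - q)⁻¹ + 1 := by
  have hS : 0 < (1 - q)⁻¹ := inv_pos.2 (by linarith)
  have hK : 0 < rexp ((1 - q)⁻¹ * (1 - q)⁻¹) := Real.exp_pos _
  have hw := weight_mem h0 h1 hδ0 hδ1
  have hw1 := abs_weight_sub_one_le h0 h1 hδ0 hδ1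
  have hg (M : ℕ) := qPochInf_inv_bounds h0 h1 (Real.rpow_pos_of_pos h0 (X - (M : ℝ)))
  rw [← tsum_mul_left]
  simp only [← mul_assoc] at hw hw1 ⊢
  set S := (1 - q)⁻¹
  set K := rexp (S * S)
  set a : ℕ → ℝ := fun M => qPochInf q (q * (1 - δ)) * ((1 - δ) ^ M / qPochFin q M)
  set g : ℕ → ℝ := fun M => (qPochInf q (-(q ^ (X - (M : ℝ)))))⁻¹
  -- `M < N` exactly when `M < X`, so the series splits at `N`.
  set N := ⌈X⌉₊
  change |∑' M, a M * g M - max X 0| ≤ _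
  have hXN : X ≤ N := Nat.le_ceil X
  have htail (i : ℕ) : a (i + N) * g (i + N) ≤ K * q ^ i := by
    have h3 : g (i + N) ≤ q ^ i := by
      refine (hg (i + N)).2.2.1.trans ?_
      rw [← Real.rpow_neg h0.le, ← Real.rpow_natCast]
      refine Real.rpow_le_rpow_of_exponent_ge h0 h1.le ?_
      push_cast
      linarith
    exact mul_le_mul (hw _).2 h3 (hg _).1 hK.le
  have htail0 (i : ℕ) : 0 ≤ a (i + N) * g (i + N) := mul_nonneg (hw _).1 (hg _).1
  have hgeo : Summable fun i : ℕ => K * q ^ i :=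
    (summable_geometric_of_lt_one h0.le h1).mul_left K
  have hst : Summable fun i => a (i + N) * g (i + N) :=
    Summable.of_nonneg_of_le htail0 htail hgeo
  have hsum : Summable fun M => a M * g M := (summable_nat_add_iff N).1 hst
  rw [← hsum.sum_add_tsum_nat_add N]
  have ht0 : 0 ≤ ∑' i, a (i + N) * g (i + N) := tsum_nonneg htail0
  have ht1 : ∑' i, a (i + N) * g (i + N) ≤ K * S := by
    refine (hst.tsum_le_tsum htail hgeo).trans_eq ?_
    rw [tsum_mul_left, tsum_geometric_of_lt_one h0.le h1]
  have hhead : |∑ M ∈ Finset.range N, a M * g M - N| ≤ K * (9 + 9 * S + S * S) + S * S := by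
    have e : ∑ M ∈ Finset.range N, a M * g M - N = ∑ M ∈ Finset.range N, (a M * g M - 1) := by
      simp
    rw [e]
    refine (Finset.abs_sum_le_sum_abs _ _).trans ?_
    -- `X > N - 1` turns `q ^ (X - M)` into a term of a geometric sum over `M < N`.
    have hterm : ∀ M ∈ Finset.range N, |a M * g M - 1|
        ≤ K * (N * δ + (δ + q ^ M) * S) + q ^ (N - 1 - M) * S := by
      intro M hM
      have hMN : M < N := Finset.mem_range.1 hM
      have hMN' : (M : ℝ) ≤ N := by exact_mod_cast hMN.le
      have e2 : a M * g M - 1 = (a M - 1) * g M + -(1 - g M) := by ring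
      rw [e2]
      refine (abs_add_le _ _).trans (add_le_add ?_ ?_)
      · rw [abs_mul, abs_of_nonneg (hg M).1]
        refine (mul_le_of_le_one_right (abs_nonneg _) (hg M).2.1).trans ((hw1 M).trans ?_)
        gcongr
      · rw [abs_neg, abs_of_nonneg (by linarith [(hg M).2.1])]
        refine (hg M).2.2.2.trans ?_
        gcongr
        rw [← Real.rpow_natCast]
        refine Real.rpow_le_rpow_of_exponent_ge h0 h1.le ?_
        have hlt : ((N - 1 : ℕ) : ℝ) < X := Nat.lt_ceil.1 (by omega)
        rw [Nat.cast_sub (by omega)]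
        linarith
    refine (Finset.sum_le_sum hterm).trans ?_
    have hr : ∑ M ∈ Finset.range N, q ^ (N - 1 - M) = ∑ M ∈ Finset.range N, q ^ M :=
      Finset.sum_range_reflect (fun i => q ^ i) N
    have hgs := sum_geom_le h0 h1 N
    have hr2 : ∑ M ∈ Finset.range N, (K * (N * δ + (δ + q ^ M) * S) + q ^ (N - 1 - M) * S)
        = K * (N * (N * δ) + (N * δ + ∑ M ∈ Finset.range N, q ^ M) * S)
          + (∑ M ∈ Finset.range N, q ^ M) * S := by
      rw [← hr]
      simp only [Finset.sum_add_distrib, ← Finset.sum_mul, ← Finset.mul_sum, Finset.sum_const,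
        Finset.card_range, nsmul_eq_mul, hr]
      ring
    rw [hr2]
    have hN1 : (N : ℝ) * δ ≤ 9 := by
      refine le_trans ?_ hX
      gcongr
      exact_mod_cast Nat.le_self_pow two_ne_zero N
    have hN2 : (N : ℝ) * (N * δ) ≤ 9 := by linarith [hX, sq (N : ℝ)]
    have : (N * δ + ∑ M ∈ Finset.range N, q ^ M) * S ≤ 9 * S + S * S := by
      rw [← add_mul]
      gcongr
    have h5 : (∑ M ∈ Finset.range N, q ^ M) * S ≤ S * S := by gcongr
    exact add_le_add (mul_le_mul_of_nonneg_left (by linarith) hK.le) h5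
  have hNX : |(N : ℝ) - max X 0| ≤ 1 := by
    rcases le_total X 0 with h | h
    · have : N = 0 := Nat.ceil_eq_zero.2 h
      simp [this, max_eq_right h]
    · rw [max_eq_left h, abs_le]
      constructor <;> linarith [Nat.ceil_lt_add_one h]
  rw [abs_le] at *
  constructor <;> nlinarith [hhead.1, hhead.2, hNX.1, hNX.2]

/-- Second assertion of Proposition 5.1: there is a constant `C > 0`, depending only on
`q ∈ (0,1)`, such that for any integer `T ≥ 2`, `ω = 1 - T^{-10}`, `J ∈ ℤ`, `m, s ∈ ℝ`,
`ε ∈ (0,1)` and `X_T = J − mT + sT^{1/3}` with `|X_T| < T^5`, one has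
`|(H_{ω;T}(m,s+ε;J) − H_{ω;T}(m,s;J))/ε − 1_{X_T ≥ 0} − (1 + X_T/(εT^{1/3}))·
1_{X_T ∈ (−εT^{1/3},0)}| ≤ C/(εT^{1/3})`. -/
theorem stmt1 (q : ℝ) (hq : q ∈ Set.Ioo (0 : ℝ) 1) :
    ∃ C : ℝ, 0 < C ∧
      ∀ (T : ℕ), 2 ≤ T → ∀ (J : ℤ) (m s ε : ℝ), ε ∈ Set.Ioo (0 : ℝ) 1 →
        |(J : ℝ) - m * T + s * (T : ℝ) ^ ((1 : ℝ) / 3)| < (T : ℝ) ^ (5 : ℝ) →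
        |(Hfun q T m (s + ε) J - Hfun q T m s J) / ε
            - (if 0 ≤ (J : ℝ) - m * T + s * (T : ℝ) ^ ((1 : ℝ) / 3) then 1 else 0)
            - (if (-(ε * (T : ℝ) ^ ((1 : ℝ) / 3)) < (J : ℝ) - m * T + s * (T : ℝ) ^ ((1 : ℝ) / 3)
                  ∧ (J : ℝ) - m * T + s * (T : ℝ) ^ ((1 : ℝ) / 3) < 0)
                then 1 + ((J : ℝ) - m * T + s * (T : ℝ) ^ ((1 : ℝ) / 3))
                    / (ε * (T : ℝ) ^ ((1 : ℝ) / 3))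
                else 0)|
          ≤ C / (ε * (T : ℝ) ^ ((1 : ℝ) / 3)) := by
  obtain ⟨h0, h1⟩ := hq
  obtain ⟨C, hC, hmain⟩ : ∃ C : ℝ, 0 < C ∧ ∀ δ : ℝ, 0 ≤ δ → δ ≤ 1 → ∀ X : ℝ,
      (⌈X⌉₊ : ℝ) ^ 2 * δ ≤ 9 →
      |qPochInf q (q * (1 - δ)) * ∑' M : ℕ, ((1 - δ) ^ M / qPochFin q M) *
        (qPochInf q (-(q ^ (X - (M : ℝ)))))⁻¹ - max X 0| ≤ C := by
    refine ⟨_, ?_, fun δ hδ0 hδ1 X hX => abs_series_sub_max_le h0 h1 hδ0 hδ1 X hX⟩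
    have hS : 0 < (1 - q)⁻¹ := inv_pos.2 (by linarith)
    positivity
  refine ⟨2 * C, by positivity, ?_⟩
  intro T hT J m s ε hε hX
  obtain ⟨hε0, hε1⟩ := hε
  have hT1 : (1 : ℝ) ≤ T := by exact_mod_cast (by omega : 1 ≤ T)
  have hTpos : (0 : ℝ) < T := by linarith
  unfold Hfun
  have e1 : ∀ M : ℕ, (s + ε) * (T : ℝ) ^ ((1 : ℝ) / 3) - m * T + (J : ℝ) - (M : ℝ)
      = ((J : ℝ) - m * T + s * (T : ℝ) ^ ((1 : ℝ) / 3) + ε * (T : ℝ) ^ ((1 : ℝ) / 3)) - M :=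
    fun M => by ring
  have e2 : ∀ M : ℕ, s * (T : ℝ) ^ ((1 : ℝ) / 3) - m * T + (J : ℝ) - (M : ℝ)
      = ((J : ℝ) - m * T + s * (T : ℝ) ^ ((1 : ℝ) / 3)) - M :=
    fun M => by ring
  simp only [e1, e2]
  set X : ℝ := (J : ℝ) - m * T + s * (T : ℝ) ^ ((1 : ℝ) / 3)
  have hδ0 : 0 ≤ (T : ℝ) ^ (-10 : ℝ) := by positivity
  have hδ1 : (T : ℝ) ^ (-10 : ℝ) ≤ 1 := Real.rpow_le_one_of_one_le_of_nonpos hT1 (by norm_num)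
  have hδT : ((T : ℝ) ^ (5 : ℝ)) ^ 2 * (T : ℝ) ^ (-10 : ℝ) = 1 := by
    rw [← Real.rpow_natCast, ← Real.rpow_mul hTpos.le, ← Real.rpow_add hTpos]
    norm_num
  have ht1 : 0 < (T : ℝ) ^ ((1 : ℝ) / 3) := by positivity
  have htT : (T : ℝ) ^ ((1 : ℝ) / 3) ≤ (T : ℝ) ^ (5 : ℝ) :=
    Real.rpow_le_rpow_of_exponent_le hT1 (by norm_num)
  have hT5 : 1 ≤ (T : ℝ) ^ (5 : ℝ) := Real.one_le_rpow hT1 (by norm_num)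
  set δ := (T : ℝ) ^ (-10 : ℝ)
  set t := (T : ℝ) ^ ((1 : ℝ) / 3)
  set R := (T : ℝ) ^ (5 : ℝ)
  -- This is where the exponents in `|X| < T ^ 5` and `δ = T ^ (-10)` have to match.
  have hceil : ∀ Z : ℝ, Z ≤ 2 * R → (⌈Z⌉₊ : ℝ) ^ 2 * δ ≤ 9 := by
    intro Z hZ
    have h3 : (⌈Z⌉₊ : ℝ) ≤ 3 * R := by
      rcases le_total Z 0 with h | h
      · rw [Nat.ceil_eq_zero.2 h]
        push_cast
        linarith
      · linarith [Nat.ceil_lt_add_one h]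
    calc (⌈Z⌉₊ : ℝ) ^ 2 * δ ≤ (3 * R) ^ 2 * δ := by gcongr
      _ = 9 := by linear_combination 9 * hδT
  have hεt : 0 < ε * t := by positivity
  have hεt' : ε * t ≤ t := mul_le_of_le_one_left ht1.le hε1.le
  have hXR := (abs_lt.1 hX).2
  have b1 := hmain δ hδ0 hδ1 X (hceil X (by linarith))
  have b2 := hmain δ hδ0 hδ1 (X + ε * t) (hceil _ (by linarith))
  set F1 := ∑' M : ℕ, ((1 - δ) ^ M / qPochFin q M) * (qPochInf q (-(q ^ (X - (M : ℝ)))))⁻¹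
  set F2 := ∑' M : ℕ, ((1 - δ) ^ M / qPochFin q M) *
    (qPochInf q (-(q ^ (X + ε * t - (M : ℝ)))))⁻¹
  set W := qPochInf q (q * (1 - δ))
  have hind : (if 0 ≤ X then (1 : ℝ) else 0)
      + (if (-(ε * t) < X ∧ X < 0) then 1 + X / (ε * t) else 0)
      = (max (X + ε * t) 0 - max X 0) / (ε * t) := by
    rw [eq_div_iff hεt.ne']
    rcases le_or_gt 0 X with h | h
    · rw [if_pos h, if_neg (fun h' => by linarith [h'.2]), max_eq_left h,
        max_eq_left (by linarith)]
      ring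
    · rw [if_neg (not_le.2 h), max_eq_right h.le]
      by_cases h2 : -(ε * t) < X
      · rw [if_pos ⟨h2, h⟩, max_eq_left (by linarith)]
        field_simp
        ring
      · rw [if_neg (fun h' => h2 h'.1), max_eq_right (by linarith)]
        ring
  rw [sub_sub, hind]
  have e3 : (W / t * F2 - W / t * F1) / ε - (max (X + ε * t) 0 - max X 0) / (ε * t)
      = ((W * F2 - max (X + ε * t) 0) - (W * F1 - max X 0)) / (ε * t) := by
    field_simp
    ring
  rw [e3, abs_div, abs_of_pos hεt]
  gcongr
  refine (abs_sub _ _).trans ?_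
  linarith
end

section
/- Fix q ∈ (0,1). There exists a constant C > 0, depending only on q, such that for every x ∈ ℝ, | (−q^x;q)_∞^{−1} − 1_{x ≥ 0} | ≤ C·q^{|x|}. (This is the indicator approximation for the inverse infinite q-product used in the proof of Proposition 5.1, equation (5.9).) -/
/-!
Write `w = q ^ x > 0` and `P = ∏ (1 + w q ^ n)`. All factors are at least `1`, so `P` is at least its
first factor `1 + w`, while `1 + t ≤ exp t` and the geometric series give `P ≤ exp (w / (1 - q))`
(`qPochInf_neg_bounds`). For `x ≥ 0` the upper bound yields
`0 ≤ 1 - P⁻¹ ≤ 1 - exp (-w / (1 - q)) ≤ w / (1 - q)`, and `w = q ^ |x|`. For `x < 0` the lower bound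
yields `0 ≤ P⁻¹ ≤ w⁻¹ = q ^ |x|`. Hence `C = 1 / (1 - q)` works in both cases.
-/

open Real

open Filter Topology in
lemma qPochInf_neg_bounds {q w : ℝ} (hq0 : 0 < q) (hq1 : q < 1) (hw : 0 < w) :
    1 + w ≤ qPochInf q (-w) ∧ qPochInf q (-w) ≤ exp (w * (1 - q)⁻¹) := by
  have hs : HasSum (fun n : ℕ => w * q ^ n) (w * (1 - q)⁻¹) :=
    (hasSum_geometric_of_lt_one hq0.le hq1).mul_left w
  have hpos : ∀ n : ℕ, 0 ≤ w * q ^ n := fun n => by positivity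
  have hdef : qPochInf q (-w) = ∏' n : ℕ, (1 + w * q ^ n) := by
    unfold qPochInf
    congr 1
    ext n
    ring
  have ht : Tendsto (fun N => ∏ n ∈ Finset.range N, (1 + w * q ^ n)) atTop
      (𝓝 (qPochInf q (-w))) := by
    rw [hdef]
    exact (Real.multipliable_one_add_of_summable hs.summable).hasProd.tendsto_prod_nat
  constructor
  · refine ge_of_tendsto ht ?_
    filter_upwards [eventually_ge_atTop 1] with N hN
    obtain ⟨M, rfl⟩ := Nat.exists_eq_add_of_le' hN
    rw [Finset.prod_range_succ']
    have h1 : 1 ≤ ∏ k ∈ Finset.range M, (1 + w * q ^ (k + 1)) :=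
      Finset.prod_induction _ (1 ≤ ·) (fun _ _ => one_le_mul_of_one_le_of_one_le) le_rfl
        fun k _ => by linarith [hpos (k + 1)]
    simpa using le_mul_of_one_le_left (by positivity : 0 ≤ 1 + w) h1
  · refine le_of_tendsto' ht fun N => ?_
    calc ∏ n ∈ Finset.range N, (1 + w * q ^ n)
        ≤ ∏ n ∈ Finset.range N, exp (w * q ^ n) :=
          Finset.prod_le_prod (fun n _ => by linarith [hpos n])
            fun n _ => by linarith [add_one_le_exp (w * q ^ n)]
      _ = exp (∑ n ∈ Finset.range N, w * q ^ n) := (exp_sum _ _).symm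
      _ ≤ exp (w * (1 - q)⁻¹) :=
          exp_le_exp.2 (sum_le_hasSum _ (fun n _ => hpos n) hs)

/-- Indicator approximation for the inverse infinite `q`-product (equation (5.9)):
for `q ∈ (0,1)` there is `C > 0`, depending only on `q`, with
`|(−q^x;q)_∞^{−1} − 1_{x ≥ 0}| ≤ C q^{|x|}` for every `x ∈ ℝ`. -/
theorem stmt2 (q : ℝ) (hq : q ∈ Set.Ioo (0 : ℝ) 1) :
    ∃ C : ℝ, 0 < C ∧ ∀ x : ℝ,
      |(qPochInf q (-(q ^ x)))⁻¹ - (if 0 ≤ x then 1 else 0)| ≤ C * q ^ |x| := by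
  obtain ⟨hq0, hq1⟩ := hq
  have hC : 0 < (1 - q)⁻¹ := inv_pos.2 (by linarith)
  refine ⟨(1 - q)⁻¹, hC, fun x => ?_⟩
  have hw : 0 < q ^ x := rpow_pos_of_pos hq0 x
  obtain ⟨hlo, hhi⟩ := qPochInf_neg_bounds hq0 hq1 hw
  have hP : 0 < qPochInf q (-(q ^ x)) := by linarith
  split_ifs with hx
  · have h1 : (qPochInf q (-(q ^ x)))⁻¹ ≤ 1 := inv_le_one_of_one_le₀ (by linarith)
    have h2 : exp (-(q ^ x * (1 - q)⁻¹)) ≤ (qPochInf q (-(q ^ x)))⁻¹ := by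
      rw [exp_neg]
      exact inv_anti₀ hP hhi
    have h3 := add_one_le_exp (-(q ^ x * (1 - q)⁻¹))
    rw [abs_of_nonneg hx, abs_of_nonpos (by linarith)]
    linarith
  · rw [abs_of_neg (not_le.1 hx), sub_zero, abs_of_pos (inv_pos.2 hP), rpow_neg hq0.le]
    calc (qPochInf q (-(q ^ x)))⁻¹ ≤ (q ^ x)⁻¹ := inv_anti₀ hw (by linarith)
      _ ≤ (1 - q)⁻¹ * (q ^ x)⁻¹ :=
          le_mul_of_one_le_left (inv_pos.2 hw).le (one_le_inv_iff₀.2 ⟨by linarith, by linarith⟩)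
end

section
/- Fix q ∈ (0,1). There exists a constant C > 0, depending only on q, such that for every a ∈ ℂ with |Im a| ≤ π, one has sin(π(log q)^{−1}(a + 2πi·j)) ≠ 0 for every nonzero integer j, and Σ_{j ∈ ℤ, j ≠ 0} | sin(π(log q)^{−1}(a + 2πi·j)) |^{−1} ≤ C. (This uniform bound on the sum over nonzero winding indices of the Mellin–Barnes sine factors is the seventh estimate of display (6.13), also used in (7.17).) -/
open Real

/-!
Since `‖exp (± i z)‖ = exp (∓ Im z)`, the sine satisfies `‖sin z‖ ≥ sinh |Im z|`, hence
`‖sin z‖ ≥ (Im z)² / 4`. For `|Im a| ≤ π` and `j ≠ 0` the imaginary part of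
`π (log q)⁻¹ (a + 2 π i j)` has absolute value at least `π² |log q|⁻¹ |j|`, because
`|Im a + 2 π j| ≥ 2 π |j| - π ≥ π |j|`. The terms of the series are therefore dominated by a
constant, depending only on `q`, times `j⁻²`. The growth of `sinh` is in fact exponential, but a
quadratic lower bound already makes the sum converge uniformly in `a`.
-/

/-- A crude quadratic consequence of `sinh |Im z| ≤ ‖sin z‖`. -/
lemma im_sq_div_four_le_norm_sin (z : ℂ) : z.im ^ 2 / 4 ≤ ‖Complex.sin z‖ := by
  have h1 : ‖Complex.sin z‖ = ‖Complex.exp (-z * Complex.I) - Complex.exp (z * Complex.I)‖ / 2 := by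
    simp [Complex.sin]
  have h2 := abs_norm_sub_norm_le (Complex.exp (-z * Complex.I)) (Complex.exp (z * Complex.I))
  have h3 : ‖Complex.exp (-z * Complex.I)‖ = Real.exp z.im := by simp [Complex.norm_exp]
  have h4 : ‖Complex.exp (z * Complex.I)‖ = Real.exp (-z.im) := by simp [Complex.norm_exp]
  rw [h3, h4] at h2
  rw [h1]
  have h5 := abs_le.mp h2
  rcases le_total 0 z.im with h | h
  · have h6 := Real.quadratic_le_exp_of_nonneg h
    have h7 : Real.exp (-z.im) ≤ 1 := Real.exp_le_one_iff.mpr (by linarith)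
    linarith
  · have h6 := Real.quadratic_le_exp_of_nonneg (neg_nonneg.mpr h)
    have h7 : Real.exp z.im ≤ 1 := Real.exp_le_one_iff.mpr h
    rw [neg_sq] at h6
    linarith

lemma sq_le_norm_sin_winding (r : ℝ) (a : ℂ) (ha : |a.im| ≤ π) (j : ℤ) (hj : j ≠ 0) :
    r ^ 2 * π ^ 2 / 4 * (j : ℝ) ^ 2 ≤
      ‖Complex.sin ((r : ℂ) * (a + 2 * ↑π * Complex.I * (j : ℂ)))‖ := by
  refine le_trans ?_ (im_sq_div_four_le_norm_sin _)
  have him : ((r : ℂ) * (a + 2 * ↑π * Complex.I * (j : ℂ))).im = r * (a.im + 2 * π * j) := by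
    simp
  have hj1 : (1 : ℝ) ≤ |(j : ℝ)| := by exact_mod_cast Int.one_le_abs hj
  have key : |π * (j : ℝ)| ≤ |a.im + 2 * π * j| := by
    have h1 : |2 * π * (j : ℝ)| ≤ |a.im + 2 * π * j| + |a.im| := by
      have := abs_sub (a.im + 2 * π * j) a.im
      rwa [add_sub_cancel_left] at this
    have hp := Real.pi_pos
    rw [abs_mul, abs_of_pos (by positivity)] at h1
    rw [abs_mul, abs_of_pos hp]
    nlinarith
  have h := mul_le_mul_of_nonneg_left (sq_le_sq.mpr key) (sq_nonneg r)
  rw [him]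
  linarith

/-- Seventh estimate of display (6.13) (also used in (7.17)): for `q ∈ (0,1)` there is a
constant `C > 0`, depending only on `q`, such that for every `a ∈ ℂ` with `|Im a| ≤ π`, the
quantities `sin(π(log q)^{−1}(a + 2πi·j))` are nonzero for all nonzero integers `j`, and
`Σ_{j ≠ 0} |sin(π(log q)^{−1}(a + 2πi·j))|^{−1} ≤ C`. -/
theorem stmt5 (q : ℝ) (hq : q ∈ Set.Ioo (0 : ℝ) 1) :
    ∃ C : ℝ, 0 < C ∧ ∀ a : ℂ, |a.im| ≤ π →
      (∀ j : ℤ, j ≠ 0 →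
        Complex.sin ((↑(π / Real.log q) : ℂ) * (a + 2 * ↑π * Complex.I * (j : ℂ))) ≠ 0) ∧
      Summable (fun j : {j : ℤ // j ≠ 0} =>
        ‖Complex.sin ((↑(π / Real.log q) : ℂ) * (a + 2 * ↑π * Complex.I * ((j : ℤ) : ℂ)))‖⁻¹) ∧
      ∑' j : {j : ℤ // j ≠ 0},
          ‖Complex.sin ((↑(π / Real.log q) : ℂ) * (a + 2 * ↑π * Complex.I * ((j : ℤ) : ℂ)))‖⁻¹
        ≤ C := by
  set r : ℝ := π / Real.log q with hr
  have hr0 : r ≠ 0 := div_ne_zero Real.pi_ne_zero (Real.log_neg hq.1 hq.2).ne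
  set c : ℝ := r ^ 2 * π ^ 2 / 4 with hc
  have hc0 : 0 < c := by have := Real.pi_pos; positivity
  have hpos : ∀ j : ℤ, j ≠ 0 → 0 < c * (j : ℝ) ^ 2 := fun j hj => by
    have : (j : ℝ) ≠ 0 := Int.cast_ne_zero.mpr hj
    positivity
  have hsum : Summable (fun j : {j : ℤ // j ≠ 0} => (c * ((j : ℤ) : ℝ) ^ 2)⁻¹) := by
    have h := (Real.summable_one_div_int_pow (p := 2)).mpr (by norm_num)
    have h2 := (h.mul_left c⁻¹).comp_injective
      (Subtype.val_injective (p := fun j : ℤ => j ≠ 0))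
    refine h2.congr fun j => ?_
    simp [mul_comm]
  -- The summand `1` only serves to make the constant visibly positive.
  refine ⟨(∑' j : {j : ℤ // j ≠ 0}, (c * ((j : ℤ) : ℝ) ^ 2)⁻¹) + 1, ?_, fun a ha => ?_⟩
  · have : 0 ≤ ∑' j : {j : ℤ // j ≠ 0}, (c * ((j : ℤ) : ℝ) ^ 2)⁻¹ :=
      tsum_nonneg fun j => by positivity
    linarith
  have hle : ∀ j : {j : ℤ // j ≠ 0},
      ‖Complex.sin ((r : ℂ) * (a + 2 * ↑π * Complex.I * ((j : ℤ) : ℂ)))‖⁻¹ ≤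
        (c * ((j : ℤ) : ℝ) ^ 2)⁻¹ := fun j =>
    inv_anti₀ (hpos j j.2) (sq_le_norm_sin_winding r a ha j j.2)
  have hs := Summable.of_nonneg_of_le (fun j => by positivity) hle hsum
  refine ⟨fun j hj => ?_, hs, ?_⟩
  · exact norm_pos_iff.mp ((hpos j hj).trans_le (sq_le_norm_sin_winding r a ha j hj))
  · exact (hs.tsum_le_tsum hle hsum).trans (by linarith)
end

section
/- Fix b ∈ (0,1), q ∈ (0,1), κ > 1, c ∈ ℝ, and a real T > 0. Then: (i) for every z > 0, G_V′(z) = (1−b)²(κ−1)(z − qβ)²/(z(z+qκ)(z+q)) + 2κρ(1−b) c T^{−1/3}(z − qβ)/(z(z+qκ)); consequently (ii) G_V′(qβ) = 0 and (iii) (qβ)²·G_V″(qβ) = 2 F_V² c T^{−1/3}; and (iv) there exists a constant C > 0, depending only on b, q, κ, c, such that |(qβ)³·G_V‴(qβ) − 2F_V³| ≤ C·T^{−1/3} for all T ≥ 1. (These are the derivative identity for G_V stated after (6.5) and the critical-point relations (6.8) in the six-vertex case K = V.) -/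
/-!
On `z > 0` the derivative of `G_V` has the partial fraction form
`A / (z + qκ) - 1 / (z + q) + B / z`, where `A` and `B` are affine in `t = T^{-1/3}`; the second and
third derivatives follow termwise. Everything in the statement is then rational algebra at
`z₀ = qb/(1-b)`, where `z₀ + q = q/(1-b)` and `z₀ + qκ = qΛ/(1-b)`, together with the relations
`κρχ = Λ F_V²` and `Λ F_V³ = (κ-1)χ²` between the cube roots. In particular the error in the third
derivative is exactly a constant times `T^{-1/3}`.
-/

open Real

/-- The function `G_V` of equations (6.3)–(6.5):
`G_V(z) = θ·log(κ^{−1}z+q) − log(z+q) + b²(1−κ^{−1})·log z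
+ 2cρT^{−1/3}·(Λ·log(κ^{−1}z+q) − b·log z)`, where `Λ = b + κ(1−b)`, `θ = κ^{−1}Λ²`,
`χ = b(1−b)` and `ρ = (1−κ^{−1})^{2/3}κ^{−1/3}χ^{1/3}Λ^{1/3}`. -/
noncomputable def GV (b q κ c T z : ℝ) : ℝ :=
  (κ⁻¹ * (b + κ * (1 - b)) ^ 2) * Real.log (κ⁻¹ * z + q) - Real.log (z + q)
    + b ^ 2 * (1 - κ⁻¹) * Real.log z
    + 2 * c * ((1 - κ⁻¹) ^ ((2 : ℝ) / 3) * κ ^ (-(1 : ℝ) / 3) * (b * (1 - b)) ^ ((1 : ℝ) / 3)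
          * (b + κ * (1 - b)) ^ ((1 : ℝ) / 3)) * T ^ (-(1 : ℝ) / 3)
        * ((b + κ * (1 - b)) * Real.log (κ⁻¹ * z + q) - b * Real.log z)

/-- The partial fractions `A / (z + m) - 1 / (z + q) + B / z`, the common shape of `G_V'`. -/
noncomputable def partialFrac (A B m q z : ℝ) : ℝ := A / (z + m) - 1 / (z + q) + B / z

/-- The coefficient `ρ`. -/
noncomputable def rhoV (b κ : ℝ) : ℝ :=
  (1 - κ⁻¹) ^ ((2 : ℝ) / 3) * κ ^ (-(1 : ℝ) / 3) * (b * (1 - b)) ^ ((1 : ℝ) / 3)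
    * (b + κ * (1 - b)) ^ ((1 : ℝ) / 3)

/-- The constant `F_V`. -/
noncomputable def FV (b κ : ℝ) : ℝ :=
  (b + κ * (1 - b)) ^ (-(1 : ℝ) / 3) * (κ - 1) ^ ((1 : ℝ) / 3) * (b * (1 - b)) ^ ((2 : ℝ) / 3)

/-- The coefficient of `1 / (z + qκ)` in `G_V'`. -/
noncomputable def coeffA (b κ c t : ℝ) : ℝ :=
  κ⁻¹ * (b + κ * (1 - b)) ^ 2 + 2 * c * rhoV b κ * t * (b + κ * (1 - b))

/-- The coefficient of `1 / z` in `G_V'`. -/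
noncomputable def coeffB (b κ c t : ℝ) : ℝ :=
  b ^ 2 * (1 - κ⁻¹) - 2 * c * rhoV b κ * t * b

theorem FV_cube {b κ : ℝ} (h0 : 0 < b) (h1 : b < 1) (hκ : 1 < κ) :
    (b + κ * (1 - b)) * FV b κ ^ 3 = (κ - 1) * (b * (1 - b)) ^ 2 := by
  have hb : 0 < 1 - b := by linarith
  have hL : 0 < b + κ * (1 - b) := by positivity
  have hk : 0 < κ - 1 := by linarith
  have hx : 0 < b * (1 - b) := by positivity
  unfold FV
  generalize b + κ * (1 - b) = L at *
  generalize κ - 1 = k at *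
  generalize b * (1 - b) = x at *
  have e1 : (L ^ (-(1 : ℝ) / 3)) ^ 3 = L⁻¹ := by
    rw [← Real.rpow_natCast, ← Real.rpow_mul hL.le, ← Real.rpow_neg_one]; norm_num
  have e2 : (k ^ ((1 : ℝ) / 3)) ^ 3 = k := by
    rw [← Real.rpow_natCast, ← Real.rpow_mul hk.le]; norm_num
  have e3 : (x ^ ((2 : ℝ) / 3)) ^ 3 = x ^ 2 := by
    rw [← Real.rpow_natCast, ← Real.rpow_mul hx.le, ← Real.rpow_natCast]; norm_num
  rw [mul_pow, mul_pow, e1, e2, e3]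
  field_simp

theorem rhoV_FV {b κ : ℝ} (h0 : 0 < b) (h1 : b < 1) (hκ : 1 < κ) :
    κ * rhoV b κ * (b * (1 - b)) = (b + κ * (1 - b)) * FV b κ ^ 2 := by
  have hb : 0 < 1 - b := by linarith
  have hκ0 : 0 < κ := by linarith
  have hL : 0 < b + κ * (1 - b) := by positivity
  have hk : 0 < κ - 1 := by linarith
  have hx : 0 < b * (1 - b) := by positivity
  have hinv : 1 - κ⁻¹ = (κ - 1) * κ⁻¹ := by field_simp
  have eκ : κ * ((κ⁻¹) ^ ((2 : ℝ) / 3) * κ ^ (-(1 : ℝ) / 3)) = 1 := by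
    rw [Real.inv_rpow hκ0.le, ← Real.rpow_neg hκ0.le, ← Real.rpow_add hκ0]
    norm_num [Real.rpow_neg_one]
    field_simp
  unfold rhoV FV
  rw [hinv, Real.mul_rpow hk.le (inv_nonneg.2 hκ0.le)]
  generalize b + κ * (1 - b) = L at *
  generalize κ - 1 = k at *
  generalize b * (1 - b) = x at *
  have e1 : L * (L ^ (-(1 : ℝ) / 3)) ^ 2 = L ^ ((1 : ℝ) / 3) := by
    rw [← Real.rpow_natCast, ← Real.rpow_mul hL.le, ← Real.rpow_one_add' hL.le (by norm_num)]
    norm_num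
  have e2 : (k ^ ((1 : ℝ) / 3)) ^ 2 = k ^ ((2 : ℝ) / 3) := by
    rw [← Real.rpow_natCast, ← Real.rpow_mul hk.le]; norm_num
  have e3 : (x ^ ((2 : ℝ) / 3)) ^ 2 = x ^ ((1 : ℝ) / 3) * x := by
    rw [← Real.rpow_natCast, ← Real.rpow_mul hx.le, ← Real.rpow_add_one' hx.le (by norm_num)]
    norm_num
  rw [mul_pow, mul_pow, e2, e3]
  linear_combination (k ^ ((2 : ℝ) / 3) * x ^ ((1 : ℝ) / 3) * x * L ^ ((1 : ℝ) / 3)) * eκ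
    - (k ^ ((2 : ℝ) / 3) * x ^ ((1 : ℝ) / 3) * x) * e1

theorem hasDerivAt_GV {b q κ c T z : ℝ} (hq : 0 < q) (hκ : 1 < κ) (hz : 0 < z) :
    HasDerivAt (GV b q κ c T)
      (partialFrac (coeffA b κ c (T ^ (-(1 : ℝ) / 3))) (coeffB b κ c (T ^ (-(1 : ℝ) / 3)))
        (q * κ) q z) z := by
  have hκ0 : 0 < κ := by linarith
  have hk : 0 < κ⁻¹ * z + q := by positivity
  have hzq : 0 < z + q := by positivity
  have d1 : HasDerivAt (fun z : ℝ => Real.log (κ⁻¹ * z + q)) (1 / (z + q * κ)) z := by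
    have h := (((hasDerivAt_id z).const_mul κ⁻¹).add_const q).log hk.ne'
    refine HasDerivAt.congr_deriv (f := fun z : ℝ => Real.log (κ⁻¹ * z + q)) h ?_
    simp only [id_eq]
    field_simp
  have d2 : HasDerivAt (fun z : ℝ => Real.log (z + q)) (1 / (z + q)) z :=
    ((hasDerivAt_id z).add_const q).log hzq.ne'
  have d3 : HasDerivAt Real.log z⁻¹ z := Real.hasDerivAt_log hz.ne'
  have h := (((d1.const_mul (κ⁻¹ * (b + κ * (1 - b)) ^ 2)).sub d2).add
    (d3.const_mul (b ^ 2 * (1 - κ⁻¹)))).add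
    (((d1.const_mul (b + κ * (1 - b))).sub (d3.const_mul b)).const_mul
      (2 * c * rhoV b κ * T ^ (-(1 : ℝ) / 3)))
  refine HasDerivAt.congr_deriv (f := GV b q κ c T) h ?_
  unfold partialFrac coeffA coeffB
  ring

theorem hasDerivAt_partialFrac {A B m q z : ℝ} (hm : 0 < m) (hq : 0 < q) (hz : 0 < z) :
    HasDerivAt (partialFrac A B m q)
      (-A / (z + m) ^ 2 + 1 / (z + q) ^ 2 - B / z ^ 2) z := by
  have hi := hasDerivAt_id z
  have d1 := (hasDerivAt_const z A).div (hi.add_const m) (by simp; positivity)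
  have d2 := (hasDerivAt_const z (1 : ℝ)).div (hi.add_const q) (by simp; positivity)
  have d3 := (hasDerivAt_const z B).div hi hz.ne'
  refine HasDerivAt.congr_deriv (f := partialFrac A B m q) ((d1.sub d2).add d3) ?_
  simp only [id_eq]
  ring

theorem hasDerivAt_partialFrac_deriv {A B m q z : ℝ} (hm : 0 < m) (hq : 0 < q) (hz : 0 < z) :
    HasDerivAt (fun z : ℝ => -A / (z + m) ^ 2 + 1 / (z + q) ^ 2 - B / z ^ 2)
      (2 * A / (z + m) ^ 3 - 2 / (z + q) ^ 3 + 2 * B / z ^ 3) z := by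
  have hi := hasDerivAt_id z
  have d1 := (hasDerivAt_const z (-A)).div ((hi.add_const m).pow 2) (by simp; positivity)
  have d2 := (hasDerivAt_const z (1 : ℝ)).div ((hi.add_const q).pow 2) (by simp; positivity)
  have d3 := (hasDerivAt_const z B).div (hi.pow 2) (by simp; positivity)
  refine HasDerivAt.congr_deriv
    (f := fun z : ℝ => -A / (z + m) ^ 2 + 1 / (z + q) ^ 2 - B / z ^ 2) ((d1.add d2).sub d3) ?_
  have h1 : 0 < z + m := by positivity
  have h2 : 0 < z + q := by positivity
  simp
  field_simp
  ring

theorem deriv2_GV {b q κ c T z : ℝ} (hq : 0 < q) (hκ : 1 < κ) (hz : 0 < z) :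
    deriv (deriv (GV b q κ c T)) z =
      -coeffA b κ c (T ^ (-(1 : ℝ) / 3)) / (z + q * κ) ^ 2 + 1 / (z + q) ^ 2
        - coeffB b κ c (T ^ (-(1 : ℝ) / 3)) / z ^ 2 := by
  have hm : 0 < q * κ := mul_pos hq (by linarith)
  refine Filter.EventuallyEq.deriv_eq (f := partialFrac _ _ _ _) ?_ |>.trans
    (hasDerivAt_partialFrac hm hq hz).deriv
  filter_upwards [Ioi_mem_nhds hz] with y hy
  exact (hasDerivAt_GV hq hκ hy).deriv

theorem deriv3_GV {b q κ c T z : ℝ} (hq : 0 < q) (hκ : 1 < κ) (hz : 0 < z) :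
    deriv (deriv (deriv (GV b q κ c T))) z =
      2 * coeffA b κ c (T ^ (-(1 : ℝ) / 3)) / (z + q * κ) ^ 3 - 2 / (z + q) ^ 3
        + 2 * coeffB b κ c (T ^ (-(1 : ℝ) / 3)) / z ^ 3 := by
  have hm : 0 < q * κ := mul_pos hq (by linarith)
  refine Filter.EventuallyEq.deriv_eq ?_ |>.trans (hasDerivAt_partialFrac_deriv hm hq hz).deriv
  filter_upwards [Ioi_mem_nhds hz] with y hy
  exact deriv2_GV hq hκ hy

/-- Combining the partial fractions: the numerator is a square plus a multiple of `z - qβ`, because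
`Λ² - κ + b²(κ-1) = κ(κ-1)(1-b)²` and `Λ - b = κ(1-b)`. -/
theorem partialFrac_eq {b q κ c t z : ℝ} (h1 : b < 1) (hq : 0 < q) (hκ : 1 < κ) (hz : 0 < z) :
    partialFrac (coeffA b κ c t) (coeffB b κ c t) (q * κ) q z =
      (1 - b) ^ 2 * (κ - 1) * (z - q * (b / (1 - b))) ^ 2 / (z * (z + q * κ) * (z + q))
        + 2 * κ * rhoV b κ * (1 - b) * c * t * (z - q * (b / (1 - b))) / (z * (z + q * κ)) := by
  have hb : 1 - b ≠ 0 := by linarith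
  have hκ0 : 0 < κ := by linarith
  have h2 : 0 < z + q * κ := by positivity
  have h3 : 0 < z + q := by positivity
  unfold partialFrac coeffA coeffB
  generalize rhoV b κ = r
  field_simp
  ring

/-- The derivative identity for `G_V` stated after (6.5) and the critical-point relations
(6.8) in the six-vertex case `K = V`, with `β = b/(1−b)`, `χ = b(1−b)`,
`ρ = (1−κ^{−1})^{2/3}κ^{−1/3}χ^{1/3}Λ^{1/3}` and `F_V = Λ^{−1/3}(κ−1)^{1/3}χ^{2/3}`:
(i) the explicit formula for `G_V′(z)` for `z > 0`; (ii) `G_V′(qβ) = 0`;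
(iii) `(qβ)²G_V″(qβ) = 2F_V²cT^{−1/3}`; (iv) `|(qβ)³G_V‴(qβ) − 2F_V³| ≤ C·T^{−1/3}` for
all `T ≥ 1`, with `C` depending only on `b, q, κ, c`. -/
theorem stmt7 (b q κ : ℝ) (hb : b ∈ Set.Ioo (0 : ℝ) 1) (hq : q ∈ Set.Ioo (0 : ℝ) 1)
    (hκ : 1 < κ) (c : ℝ) :
    (∀ T : ℝ, 0 < T → ∀ z : ℝ, 0 < z →
      deriv (GV b q κ c T) z =
        (1 - b) ^ 2 * (κ - 1) * (z - q * (b / (1 - b))) ^ 2 / (z * (z + q * κ) * (z + q))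
          + 2 * κ * ((1 - κ⁻¹) ^ ((2 : ℝ) / 3) * κ ^ (-(1 : ℝ) / 3)
                * (b * (1 - b)) ^ ((1 : ℝ) / 3) * (b + κ * (1 - b)) ^ ((1 : ℝ) / 3))
              * (1 - b) * c * T ^ (-(1 : ℝ) / 3) * (z - q * (b / (1 - b)))
              / (z * (z + q * κ))) ∧
    (∀ T : ℝ, 0 < T → deriv (GV b q κ c T) (q * (b / (1 - b))) = 0) ∧
    (∀ T : ℝ, 0 < T →
      (q * (b / (1 - b))) ^ 2 * deriv (deriv (GV b q κ c T)) (q * (b / (1 - b)))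
        = 2 * ((b + κ * (1 - b)) ^ (-(1 : ℝ) / 3) * (κ - 1) ^ ((1 : ℝ) / 3)
              * (b * (1 - b)) ^ ((2 : ℝ) / 3)) ^ 2 * c * T ^ (-(1 : ℝ) / 3)) ∧
    (∃ C : ℝ, 0 < C ∧ ∀ T : ℝ, 1 ≤ T →
      |(q * (b / (1 - b))) ^ 3 * deriv (deriv (deriv (GV b q κ c T))) (q * (b / (1 - b)))
          - 2 * ((b + κ * (1 - b)) ^ (-(1 : ℝ) / 3) * (κ - 1) ^ ((1 : ℝ) / 3)
              * (b * (1 - b)) ^ ((2 : ℝ) / 3)) ^ 3|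
        ≤ C * T ^ (-(1 : ℝ) / 3)) := by
  obtain ⟨h0, h1⟩ := hb
  have hq0 := hq.1
  have hb : 0 < 1 - b := by linarith
  have hκ0 : 0 < κ := by linarith
  have hL : 0 < b + κ * (1 - b) := by positivity
  have hz₀ : 0 < q * (b / (1 - b)) := by positivity
  have hzm : q * (b / (1 - b)) + q * κ = q * (b + κ * (1 - b)) / (1 - b) := by
    field_simp
  have hzq : q * (b / (1 - b)) + q = q / (1 - b) := by
    field_simp
    ring
  have hfirst : ∀ T : ℝ, ∀ z : ℝ, 0 < z → deriv (GV b q κ c T) z =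
      (1 - b) ^ 2 * (κ - 1) * (z - q * (b / (1 - b))) ^ 2 / (z * (z + q * κ) * (z + q))
        + 2 * κ * rhoV b κ * (1 - b) * c * T ^ (-(1 : ℝ) / 3) * (z - q * (b / (1 - b)))
          / (z * (z + q * κ)) := fun T z hz =>
    (hasDerivAt_GV hq0 hκ hz).deriv.trans (partialFrac_eq h1 hq0 hκ hz)
  refine ⟨fun T _ z hz => hfirst T z hz, fun T _ => ?_, fun T _ => ?_, ?_⟩
  · rw [hfirst T _ hz₀]
    simp
  · change _ = 2 * FV b κ ^ 2 * c * T ^ (-(1 : ℝ) / 3)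
    rw [deriv2_GV hq0 hκ hz₀, hzm, hzq]
    have key : FV b κ ^ 2 = κ * rhoV b κ * (b * (1 - b)) / (b + κ * (1 - b)) := by
      rw [rhoV_FV h0 h1 hκ]
      field_simp
    rw [key]
    unfold coeffA coeffB
    generalize rhoV b κ = r
    generalize T ^ (-(1 : ℝ) / 3) = t
    field_simp
    ring
  · -- `K` is the coefficient of `T^{-1/3}` in the exact expansion of the third derivative.
    obtain ⟨K, hK⟩ : ∃ K : ℝ, K = 4 * c * rhoV b κ * b * (b ^ 2 / (b + κ * (1 - b)) ^ 2 - 1) :=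
      ⟨_, rfl⟩
    refine ⟨|K| + 1, by positivity, fun T hT => ?_⟩
    change |_ - 2 * FV b κ ^ 3| ≤ _
    have ht : 0 ≤ T ^ (-(1 : ℝ) / 3) := Real.rpow_nonneg (by linarith) _
    have key : FV b κ ^ 3 = (κ - 1) * (b * (1 - b)) ^ 2 / (b + κ * (1 - b)) := by
      rw [← FV_cube h0 h1 hκ]
      field_simp
    have hexp : (q * (b / (1 - b))) ^ 3 * deriv (deriv (deriv (GV b q κ c T))) (q * (b / (1 - b)))
        - 2 * FV b κ ^ 3 = K * T ^ (-(1 : ℝ) / 3) := by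
      rw [deriv3_GV hq0 hκ hz₀, hzm, hzq, key, hK]
      unfold coeffA coeffB
      generalize rhoV b κ = r
      generalize T ^ (-(1 : ℝ) / 3) = t
      field_simp
      ring
    rw [hexp, abs_mul, abs_of_nonneg ht]
    gcongr
    linarith
end

section
/- Fix b ∈ (0,1) and q ∈ (0,1), and set β = b/(1−b), χ = b(1−b). Then for every u ∈ ℝ, the argument qβ(1 + χ^{−2/3}T^{−1/3}u) is positive for all sufficiently large T > 0, and lim_{T→∞} T·( Ω_A( qβ(1 + χ^{−2/3}T^{−1/3}u) ) − Ω_A(qβ) ) = u³/3. (This cubic rescaling limit at the double critical point qβ is the content of the K = A case of displays (6.8) and (7.28): qβ is a critical point of Ω_A with vanishing second derivative and (qβ)³Ω_A‴(qβ) = 2χ².) -/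
/-!
With `z = qβ(1 + s)` one has `z + q = q(1 + bs)/(1 - b)`, so all dependence on `q` cancels and
`Ω_A(qβ(1 + s)) - Ω_A(qβ) = (1 - b)(1/(1 + bs) - 1) + (1 - 2b) log(1 + bs) + b² log(1 + s)`.
In the Taylor expansion at `s = 0` the linear and quadratic terms vanish and the cubic coefficient
is `χ²/3`; the remainder is at most `6 s⁴` for `|s| ≤ 1/2` (`OmegaA_cubic_bound`). For
`s = χ^{-2/3} T^{-1/3} u` we have `T χ² s³ = u³`, while `T s⁴ = (χ⁻² u³) s → 0`.
-/

open Real Filter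

/-- The function `Ω_A` of equation (6.5):
`Ω_A(z) = q/(q+z) + (1−2b)·log(z+q) + b²·log z`. -/
noncomputable def OmegaA (b q z : ℝ) : ℝ :=
  q / (q + z) + (1 - 2 * b) * Real.log (z + q) + b ^ 2 * Real.log z

lemma log_cubic_bound {x : ℝ} (hx : |x| ≤ 1 / 2) :
    |Real.log (1 + x) - (x - x ^ 2 / 2 + x ^ 3 / 3)| ≤ 2 * x ^ 4 := by
  have h := Real.abs_log_sub_add_sum_range_le (x := -x) (by rw [abs_neg]; linarith) 3
  rw [abs_neg] at h
  have e : (∑ i ∈ Finset.range 3, (-x) ^ (i + 1) / ((i : ℝ) + 1)) + Real.log (1 - -x)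
      = Real.log (1 + x) - (x - x ^ 2 / 2 + x ^ 3 / 3) := by
    simp only [Finset.sum_range_succ, Finset.sum_range_zero, sub_neg_eq_add]
    push_cast
    ring
  rw [e] at h
  refine h.trans ?_
  have h4 : |x| ^ (3 + 1) = x ^ 4 := by
    rw [← abs_pow]
    exact abs_of_nonneg ((by decide : Even 4).pow_nonneg x)
  rw [h4, div_le_iff₀ (by linarith)]
  nlinarith [show 0 ≤ x ^ 4 by positivity]

lemma OmegaA_sub_eq {b q s : ℝ} (hb : b ∈ Set.Ioo (0 : ℝ) 1) (hq : 0 < q) (hs : |s| ≤ 1 / 2) :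
    OmegaA b q (q * (b / (1 - b)) * (1 + s)) - OmegaA b q (q * (b / (1 - b)))
      = (1 - b) * (1 / (1 + b * s) - 1) + (1 - 2 * b) * Real.log (1 + b * s)
        + b ^ 2 * Real.log (1 + s) := by
  obtain ⟨hb0, hb1⟩ := hb
  obtain ⟨hs1, hs2⟩ := abs_le.mp hs
  have h1b : 0 < 1 - b := by linarith
  have h1s : 0 < 1 + s := by linarith
  have h1bs : 0 < 1 + b * s := by nlinarith
  have hz : 0 < q * (b / (1 - b)) := by positivity
  have e1 : q * (b / (1 - b)) * (1 + s) + q = q / (1 - b) * (1 + b * s) := by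
    field_simp
    ring
  have e2 : q * (b / (1 - b)) + q = q / (1 - b) := by
    field_simp
    ring
  have hq1 : 0 < q / (1 - b) := by positivity
  unfold OmegaA
  rw [add_comm q, add_comm q, e1, e2, Real.log_mul hq1.ne' h1bs.ne', Real.log_mul hz.ne' h1s.ne']
  have e3 : q / (q / (1 - b) * (1 + b * s)) = (1 - b) * (1 / (1 + b * s)) := by
    field_simp
  have e4 : q / (q / (1 - b)) = 1 - b := by
    field_simp
  rw [e3, e4]
  ring

/-- Third-order Taylor expansion of `Ω_A` at `qβ` in the relative displacement `s`, with an
explicit quartic remainder. The absence of terms in `s` and `s²` says that `qβ` is a double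
critical point. -/
lemma OmegaA_cubic_bound {b q s : ℝ} (hb : b ∈ Set.Ioo (0 : ℝ) 1) (hq : 0 < q)
    (hs : |s| ≤ 1 / 2) :
    |OmegaA b q (q * (b / (1 - b)) * (1 + s)) - OmegaA b q (q * (b / (1 - b)))
      - (b * (1 - b)) ^ 2 * s ^ 3 / 3| ≤ 6 * s ^ 4 := by
  rw [OmegaA_sub_eq hb hq hs]
  obtain ⟨hb0, hb1⟩ := hb
  obtain ⟨hs1, hs2⟩ := abs_le.mp hs
  have h1bs : 1 / 2 ≤ 1 + b * s := by nlinarith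
  have hpos : 0 < 1 + b * s := by linarith
  have hbs : |b * s| ≤ 1 / 2 := by
    rw [abs_mul, abs_of_pos hb0]
    nlinarith [abs_nonneg s]
  have hs4 : 0 ≤ s ^ 4 := by positivity
  have hb4 : b ^ 4 ≤ 1 := pow_le_one₀ hb0.le hb1.le
  have hbs4 : (b * s) ^ 4 ≤ s ^ 4 := by
    rw [mul_pow]
    nlinarith
  have hA := log_cubic_bound hs
  have hB := log_cubic_bound hbs
  set P := Real.log (1 + s) - (s - s ^ 2 / 2 + s ^ 3 / 3) with hP
  set Q := Real.log (1 + b * s) - (b * s - (b * s) ^ 2 / 2 + (b * s) ^ 3 / 3) with hQ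
  have e : (1 - b) * (1 / (1 + b * s) - 1) + (1 - 2 * b) * Real.log (1 + b * s)
        + b ^ 2 * Real.log (1 + s) - (b * (1 - b)) ^ 2 * s ^ 3 / 3
      = (1 - b) * ((b * s) ^ 4 / (1 + b * s)) + (1 - 2 * b) * Q + b ^ 2 * P := by
    rw [hP, hQ]
    field_simp
    ring
  rw [e]
  have t1 : |(1 - b) * ((b * s) ^ 4 / (1 + b * s))| ≤ 2 * s ^ 4 := by
    have h0 : 0 ≤ (b * s) ^ 4 / (1 + b * s) := by positivity
    have h1 : (b * s) ^ 4 / (1 + b * s) ≤ 2 * s ^ 4 := by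
      rw [div_le_iff₀ hpos]
      nlinarith
    rw [abs_of_nonneg (mul_nonneg (by linarith) h0)]
    nlinarith
  have t2 : |(1 - 2 * b) * Q| ≤ 2 * s ^ 4 := by
    rw [abs_mul]
    have : |1 - 2 * b| ≤ 1 := abs_le.mpr ⟨by linarith, by linarith⟩
    nlinarith [abs_nonneg Q]
  have t3 : |b ^ 2 * P| ≤ 2 * s ^ 4 := by
    rw [abs_mul, abs_of_nonneg (sq_nonneg b)]
    have : b ^ 2 ≤ 1 := pow_le_one₀ hb0.le hb1.le
    nlinarith [abs_nonneg P]
  have := abs_add_three ((1 - b) * ((b * s) ^ 4 / (1 + b * s))) ((1 - 2 * b) * Q) (b ^ 2 * P)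
  linarith

/-- Cubic rescaling limit at the double critical point `qβ` (the `K = A` case of displays
(6.8) and (7.28)): with `β = b/(1−b)` and `χ = b(1−b)`, for every `u ∈ ℝ` the argument
`qβ(1 + χ^{−2/3}T^{−1/3}u)` is positive for all sufficiently large `T > 0`, and
`lim_{T→∞} T·(Ω_A(qβ(1 + χ^{−2/3}T^{−1/3}u)) − Ω_A(qβ)) = u³/3`. -/
theorem stmt8 (b q : ℝ) (hb : b ∈ Set.Ioo (0 : ℝ) 1) (hq : q ∈ Set.Ioo (0 : ℝ) 1) (u : ℝ) :
    (∃ T₀ : ℝ, 0 < T₀ ∧ ∀ T : ℝ, T₀ ≤ T →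
      0 < q * (b / (1 - b))
          * (1 + (b * (1 - b)) ^ (-(2 : ℝ) / 3) * T ^ (-(1 : ℝ) / 3) * u)) ∧
    Tendsto
      (fun T : ℝ =>
        T * (OmegaA b q (q * (b / (1 - b))
                * (1 + (b * (1 - b)) ^ (-(2 : ℝ) / 3) * T ^ (-(1 : ℝ) / 3) * u))
            - OmegaA b q (q * (b / (1 - b)))))
      atTop (nhds (u ^ 3 / 3)) := by
  have hb' := hb
  obtain ⟨hb0, hb1⟩ := hb'
  have hq0 : 0 < q := hq.1
  have h1b : 0 < 1 - b := by linarith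
  have hχ : 0 < b * (1 - b) := by positivity
  have hz : 0 < q * (b / (1 - b)) := by positivity
  set s : ℝ → ℝ := fun T => (b * (1 - b)) ^ (-(2 : ℝ) / 3) * T ^ (-(1 : ℝ) / 3) * u with hs
  have hs0 : Tendsto s atTop (nhds 0) := by
    have h := tendsto_rpow_neg_atTop (show (0 : ℝ) < 1 / 3 by norm_num)
    rw [show -((1 : ℝ) / 3) = -(1 : ℝ) / 3 by norm_num] at h
    simpa [hs] using (h.const_mul ((b * (1 - b)) ^ (-(2 : ℝ) / 3))).mul_const u
  have hsmall : ∀ᶠ T in atTop, |s T| ≤ 1 / 2 := by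
    have h := hs0.abs
    rw [abs_zero] at h
    exact h.eventually_le_const (by norm_num)
  have hcube : ∀ T : ℝ, 0 < T → T * ((b * (1 - b)) ^ 2 * s T ^ 3) = u ^ 3 := by
    intro T hT
    have h1 : ((b * (1 - b)) ^ (-(2 : ℝ) / 3)) ^ 3 = ((b * (1 - b)) ^ 2)⁻¹ := by
      rw [← Real.rpow_mul_natCast hχ.le, ← Real.rpow_natCast _ 2, ← Real.rpow_neg hχ.le]
      norm_num
    have h2 : (T ^ (-(1 : ℝ) / 3)) ^ 3 = T⁻¹ := by
      rw [← Real.rpow_mul_natCast hT.le, ← Real.rpow_neg_one]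
      norm_num
    simp only [hs]
    rw [mul_pow (_ * _) u, mul_pow (_ ^ _) (_ ^ _), h1, h2]
    field_simp
  constructor
  · obtain ⟨T₁, hT₁⟩ := eventually_atTop.mp hsmall
    refine ⟨max T₁ 1, by positivity, fun T hT => mul_pos hz ?_⟩
    have h := (abs_le.mp (hT₁ T ((le_max_left _ _).trans hT))).1
    simp only [hs] at h
    linarith
  · rw [tendsto_iff_norm_sub_tendsto_zero]
    have hlim : Tendsto (fun T => 6 * (|u ^ 3| / (b * (1 - b)) ^ 2) * |s T|) atTop (nhds 0) := by
      simpa only [abs_zero, mul_zero] using hs0.abs.const_mul (6 * (|u ^ 3| / (b * (1 - b)) ^ 2))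
    refine squeeze_zero' (Eventually.of_forall fun T => norm_nonneg _) ?_ hlim
    filter_upwards [hsmall, eventually_gt_atTop 0] with T hT hT0
    have hbd := OmegaA_cubic_bound hb hq0 hT
    have hc := hcube T hT0
    rw [Real.norm_eq_abs, ← hc]
    change |T * (OmegaA b q (q * (b / (1 - b)) * (1 + s T)) - OmegaA b q (q * (b / (1 - b))))
      - T * ((b * (1 - b)) ^ 2 * s T ^ 3) / 3| ≤ _
    rw [mul_div_assoc, ← mul_sub, abs_mul, abs_of_pos hT0]
    refine (mul_le_mul_of_nonneg_left hbd hT0.le).trans (le_of_eq ?_)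
    have h4 : s T ^ 4 = |s T| ^ 3 * |s T| := by
      rw [← pow_succ, ← abs_pow]
      exact (abs_of_nonneg ((by decide : Even 4).pow_nonneg _)).symm
    rw [abs_mul, abs_mul, abs_of_pos hT0, abs_of_pos (pow_pos hχ 2), abs_pow, h4]
    field_simp
end

section
/- For all x, y ∈ ℝ, both sides of the following identity converge absolutely and are equal: ∫_0^∞ Ai(x+λ)·Ai(y+λ) dλ = (1/(2πi)²) ∫_V ∫_W exp( w³/3 − v³/3 − x·w + y·v ) / (w − v) dw dv. In other words, the Airy kernel K_{Ai}(x,y) = ∫_0^∞ Ai(x+λ)Ai(y+λ) dλ of Definition 1.1 admits the stated double contour integral representation, in which the w-contour W lies strictly to the right of the v-contour V (so that w − v ≠ 0 throughout). -/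
/-!
The contour `V` is `-W` with the opposite orientation (`vP s = -wP (-s)`), so the Airy function
is also `Ai y = (1 / 2πi) ∫_V exp (-v³/3 + y v) dv` (`Ai_eq_integral_vInt`). Since
`Re (w - v) ≥ 2` for `w ∈ W`, `v ∈ V`, one has `1 / (w - v) = ∫_0^∞ exp (-l (w - v)) dl`.
Writing `Ai (x + l)` as an integral over `W` and `Ai (y + l)` as an integral over `V`, the factor
`exp (-l (w - v))` appears in the product, and the identity is Fubini's theorem on
`(0, ∞) × (V × W)`. Fubini applies (`integrable_triple`) because the integrand is bounded by
`exp (-2 l)` times a product of two integrable functions; these are integrable (`integrable_wInt`,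
`integrable_vInt`) because on `W` the real part of `w³/3` is a cubic in `|t|` which is at most
`1/3 + |t|/2 - t²/2`. The absolute convergence of both sides is part of the same application of
Fubini.
-/

open Real MeasureTheory

/-- Parametrization of the contour `W`: `w(t) = 1 + |t|·e^{i·sgn(t)·π/3}`. -/
noncomputable def wP (t : ℝ) : ℂ :=
  1 + ((|t| : ℝ) : ℂ) * Complex.exp (Complex.I * ((Real.sign t * (π / 3) : ℝ) : ℂ))

/-- Velocity of the parametrization of `W`. -/
noncomputable def wD (t : ℝ) : ℂ :=
  if 0 ≤ t then Complex.exp (Complex.I * ((π / 3 : ℝ) : ℂ))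
  else -Complex.exp (-(Complex.I * ((π / 3 : ℝ) : ℂ)))

/-- Parametrization of the contour `V`: `v(t) = −1 + |t|·e^{i·sgn(t)·2π/3}`. -/
noncomputable def vP (t : ℝ) : ℂ :=
  -1 + ((|t| : ℝ) : ℂ) * Complex.exp (Complex.I * ((Real.sign t * (2 * π / 3) : ℝ) : ℂ))

/-- Velocity of the parametrization of `V`. -/
noncomputable def vD (t : ℝ) : ℂ :=
  if 0 ≤ t then Complex.exp (Complex.I * ((2 * π / 3 : ℝ) : ℂ))
  else -Complex.exp (-(Complex.I * ((2 * π / 3 : ℝ) : ℂ)))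

/-- The Airy function `Ai(x) = (1/(2πi)) ∫_W exp(w³/3 − x·w) dw`, the contour integral
being computed via the parametrization `wP`. -/
noncomputable def Ai (x : ℝ) : ℂ :=
  (1 / (2 * (π : ℂ) * Complex.I)) *
    ∫ t : ℝ, Complex.exp ((wP t) ^ 3 / 3 - (x : ℂ) * wP t) * wD t

lemma wP_eq (t : ℝ) :
    wP t = ((1 + |t| / 2 : ℝ) : ℂ) + ((t * (√3 / 2) : ℝ) : ℂ) * Complex.I := by
  unfold wP
  rw [mul_comm Complex.I, Complex.exp_mul_I, ← Complex.ofReal_cos, ← Complex.ofReal_sin]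
  rcases lt_trichotomy t 0 with h | h | h
  · rw [Real.sign_of_neg h, abs_of_neg h, neg_one_mul, Real.cos_neg, Real.sin_neg,
      Real.cos_pi_div_three, Real.sin_pi_div_three]
    push_cast; ring
  · subst h; simp
  · rw [Real.sign_of_pos h, abs_of_pos h, one_mul,
      Real.cos_pi_div_three, Real.sin_pi_div_three]
    push_cast; ring

lemma cos_two_pi_div_three : Real.cos (2 * π / 3) = -(1 / 2) := by
  rw [show 2 * π / 3 = π - π / 3 by ring, Real.cos_pi_sub, Real.cos_pi_div_three]

lemma sin_two_pi_div_three : Real.sin (2 * π / 3) = √3 / 2 := by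
  rw [show 2 * π / 3 = π - π / 3 by ring, Real.sin_pi_sub, Real.sin_pi_div_three]

/-- `V` is the contour `-W` traversed backwards. -/
lemma vP_eq (t : ℝ) : vP t = -wP (-t) := by
  rw [wP_eq]
  unfold vP
  rw [mul_comm Complex.I, Complex.exp_mul_I, ← Complex.ofReal_cos, ← Complex.ofReal_sin]
  rcases lt_trichotomy t 0 with h | h | h
  · rw [Real.sign_of_neg h, abs_neg, abs_of_neg h, neg_one_mul, Real.cos_neg, Real.sin_neg,
      cos_two_pi_div_three, sin_two_pi_div_three]
    push_cast; ring
  · subst h; simp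
  · rw [Real.sign_of_pos h, abs_neg, abs_of_pos h, one_mul,
      cos_two_pi_div_three, sin_two_pi_div_three]
    push_cast; ring

/-- At `t = 0` the two sides are different one-sided velocities at the corner of the contour. -/
lemma vD_eq {t : ℝ} (ht : t ≠ 0) : vD t = wD (-t) := by
  unfold vD wD
  rcases lt_or_gt_of_ne ht with h | h
  · rw [if_neg (by linarith), if_pos (by linarith),
      show -(Complex.I * ((2 * π / 3 : ℝ) : ℂ))
        = Complex.I * ((π / 3 : ℝ) : ℂ) - π * Complex.I by push_cast; ring,
      Complex.exp_sub, Complex.exp_pi_mul_I, div_neg, div_one, neg_neg]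
  · rw [if_pos h.le, if_neg (by linarith),
      show Complex.I * ((2 * π / 3 : ℝ) : ℂ)
        = -(Complex.I * ((π / 3 : ℝ) : ℂ)) + π * Complex.I by push_cast; ring,
      Complex.exp_add, Complex.exp_pi_mul_I]
    simp

lemma wP_re (t : ℝ) : (wP t).re = 1 + |t| / 2 := by
  simp [wP_eq]

lemma vP_re (t : ℝ) : (vP t).re = -(1 + |t| / 2) := by
  rw [vP_eq, Complex.neg_re, wP_re, abs_neg]

lemma two_le_re_sub (s t : ℝ) : 2 ≤ (wP t - vP s).re := by
  rw [Complex.sub_re, wP_re, vP_re]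
  linarith [abs_nonneg s, abs_nonneg t]

lemma wP_cube_re (t : ℝ) :
    ((wP t) ^ 3).re = 1 + 3 / 2 * |t| - 3 / 2 * t ^ 2 - |t| ^ 3 := by
  have h3 : √3 ^ 2 = 3 := Real.sq_sqrt (by norm_num)
  have ht : |t| ^ 2 = t ^ 2 := sq_abs t
  have him : (wP t).im = t * (√3 / 2) := by simp [wP_eq]
  have hre := wP_re t
  have : ((wP t) ^ 3).re = (wP t).re ^ 3 - 3 * (wP t).re * (wP t).im ^ 2 := by
    simp [pow_succ]; ring
  rw [this, hre, him, mul_pow, div_pow, h3, ← ht]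
  ring

lemma measurable_wP : Measurable wP := by
  rw [show wP = fun t => _ from funext wP_eq]
  fun_prop

lemma measurable_vP : Measurable vP := by
  rw [show vP = fun t => _ from funext vP_eq]
  exact (measurable_wP.comp measurable_neg).neg

lemma measurable_wD : Measurable wD :=
  Measurable.ite measurableSet_Ici measurable_const measurable_const

lemma norm_wD (t : ℝ) : ‖wD t‖ = 1 := by
  unfold wD
  split_ifs
  · rw [mul_comm, Complex.norm_exp_ofReal_mul_I]
  · rw [norm_neg, ← mul_neg, ← Complex.ofReal_neg, mul_comm, Complex.norm_exp_ofReal_mul_I]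

/-- The integrand `exp (w³/3 - x w) dw` of the Airy function along `W`. -/
noncomputable def wInt (x t : ℝ) : ℂ :=
  Complex.exp ((wP t) ^ 3 / 3 - (x : ℂ) * wP t) * wD t

/-- The integrand `exp (-v³/3 + y v) dv` along `V`, the image of `wInt` under `v = -w`. -/
noncomputable def vInt (y s : ℝ) : ℂ :=
  Complex.exp (-(vP s) ^ 3 / 3 + (y : ℂ) * vP s) * vD s

lemma vInt_eq {y s : ℝ} (hs : s ≠ 0) : vInt y s = wInt y (-s) := by
  unfold vInt wInt
  rw [vP_eq, vD_eq hs]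
  congr 2
  ring

lemma vInt_ae_eq (y : ℝ) : vInt y =ᵐ[volume] fun s => wInt y (-s) := by
  filter_upwards [Measure.ae_ne volume (0 : ℝ)] with s hs using vInt_eq hs

lemma Ai_eq_integral_wInt (x : ℝ) :
    Ai x = (1 / (2 * (π : ℂ) * Complex.I)) * ∫ t : ℝ, wInt x t := rfl

lemma Ai_eq_integral_vInt (y : ℝ) :
    Ai y = (1 / (2 * (π : ℂ) * Complex.I)) * ∫ s : ℝ, vInt y s := by
  rw [integral_congr_ae (vInt_ae_eq y), integral_neg_eq_self (wInt y), Ai_eq_integral_wInt]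

lemma integrable_wInt (x : ℝ) : Integrable (wInt x) := by
  have hG : Integrable fun t : ℝ =>
      Real.exp (1 / 3 - x + (1 - x) ^ 2 / 4) * Real.exp (-(1 / 4) * t ^ 2) :=
    (integrable_exp_neg_mul_sq (by norm_num)).const_mul _
  refine hG.mono' ?_ (.of_forall fun t => ?_)
  · have := measurable_wP
    have := measurable_wD
    unfold wInt
    exact Measurable.aestronglyMeasurable (by fun_prop)
  · have h3 : ((wP t) ^ 3 / 3).re = ((wP t) ^ 3).re / 3 := by
      simp
    rw [wInt, norm_mul, norm_wD, mul_one, Complex.norm_exp, ← Real.exp_add, Real.exp_le_exp,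
      Complex.sub_re, h3, Complex.re_ofReal_mul, wP_cube_re, wP_re]
    -- completing the square in `(1 - x) / 2 * |t| ≤ |t|² / 4 + (1 - x)² / 4`
    nlinarith [sq_nonneg (|t| - (1 - x)), sq_abs t, pow_nonneg (abs_nonneg t) 3]

lemma integrable_vInt (y : ℝ) : Integrable (vInt y) :=
  (integrable_wInt y).comp_neg.congr (vInt_ae_eq y).symm

/-- Shifting both arguments by `l` multiplies the integrand by `exp (-l (w - v))`. -/
lemma vInt_mul_wInt_shift (x y l s t : ℝ) :
    vInt (y + l) s * wInt (x + l) t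
      = Complex.exp (-(wP t - vP s) * l) * (vInt y s * wInt x t) := by
  have e1 : ∀ a b c d : ℂ, Complex.exp a * c * (Complex.exp b * d)
      = Complex.exp (a + b) * (c * d) := fun a b c d => by rw [Complex.exp_add]; ring
  unfold vInt wInt
  rw [e1, e1, ← mul_assoc (Complex.exp _) (Complex.exp _), ← Complex.exp_add]
  congr 2
  push_cast
  ring

/-- Absolute convergence of the triple integral behind the identity, dominated by
`exp (-2 l)` times the product of the integrands along `V` and `W`. -/
lemma integrable_triple (x y : ℝ) :
    Integrable (fun q : ℝ × ℝ × ℝ => vInt (y + q.1) q.2.1 * wInt (x + q.1) q.2.2)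
      ((volume.restrict (Set.Ioi 0)).prod (volume.prod volume)) := by
  have hexp : Integrable (fun l : ℝ => ((Real.exp (-2 * l) : ℝ) : ℂ))
      (volume.restrict (Set.Ioi 0)) := (exp_neg_integrableOn_Ioi 0 two_pos).ofReal
  have hdom := hexp.mul_prod ((integrable_vInt y).mul_prod (integrable_wInt x))
  simp_rw [vInt_mul_wInt_shift]
  refine hdom.mono ?_ ?_
  · have := measurable_wP
    have := measurable_vP
    refine AEStronglyMeasurable.mul (Measurable.aestronglyMeasurable (by fun_prop)) ?_
    exact ((integrable_vInt y).mul_prod (integrable_wInt x)).aestronglyMeasurable.comp_snd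
  · have hpos : ∀ᵐ q : ℝ × ℝ × ℝ ∂((volume.restrict (Set.Ioi 0)).prod (volume.prod volume)),
        0 < q.1 :=
      Measure.quasiMeasurePreserving_fst.ae (ae_restrict_mem measurableSet_Ioi)
    filter_upwards [hpos] with q hq
    rw [norm_mul (Complex.exp _), norm_mul ((Real.exp _ : ℝ) : ℂ)]
    refine mul_le_mul_of_nonneg_right ?_ (norm_nonneg _)
    rw [Complex.norm_exp, Complex.norm_real, Real.norm_of_nonneg (Real.exp_pos _).le,
      Real.exp_le_exp, Complex.re_mul_ofReal, Complex.neg_re]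
    nlinarith [two_le_re_sub q.2.1 q.2.2]

/-- Integrating out `l` produces the factor `1 / (w - v)`. -/
lemma integral_shift (x y s t : ℝ) :
    ∫ l in Set.Ioi (0 : ℝ), vInt (y + l) s * wInt (x + l) t
      = Complex.exp ((wP t) ^ 3 / 3 - (vP s) ^ 3 / 3 - (x : ℂ) * wP t + (y : ℂ) * vP s)
          / (wP t - vP s) * wD t * vD s := by
  have hre : (-(wP t - vP s)).re < 0 := by
    rw [Complex.neg_re]; linarith [two_le_re_sub s t]
  simp_rw [vInt_mul_wInt_shift]
  rw [integral_mul_const, integral_exp_mul_complex_Ioi hre, Complex.ofReal_zero, mul_zero,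
    Complex.exp_zero, neg_div_neg_eq, vInt, wInt,
    show (wP t) ^ 3 / 3 - (vP s) ^ 3 / 3 - (x : ℂ) * wP t + (y : ℂ) * vP s
      = (-(vP s) ^ 3 / 3 + (y : ℂ) * vP s) + ((wP t) ^ 3 / 3 - (x : ℂ) * wP t) by ring,
    Complex.exp_add (-(vP s) ^ 3 / 3 + (y : ℂ) * vP s)]
  ring

lemma Ai_mul_Ai (x y l : ℝ) :
    Ai (x + l) * Ai (y + l) = (1 / (2 * (π : ℂ) * Complex.I)) ^ 2 *
      ∫ p : ℝ × ℝ, vInt (y + l) p.1 * wInt (x + l) p.2 := by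
  rw [Measure.volume_eq_prod, integral_prod_mul, Ai_eq_integral_wInt, Ai_eq_integral_vInt]
  ring

/-- Double contour integral representation of the Airy kernel (Definition 1.1): for all
`x, y ∈ ℝ`, the `w`-contour lies strictly to the right of the `v`-contour (so `w − v ≠ 0`),
both sides converge absolutely, and
`∫_0^∞ Ai(x+λ)Ai(y+λ) dλ =
(1/(2πi)²) ∫_V ∫_W exp(w³/3 − v³/3 − xw + yv)/(w − v) dw dv`. -/
theorem stmt10 (x y : ℝ) :
    (∀ s t : ℝ, wP t - vP s ≠ 0) ∧
    IntegrableOn (fun l : ℝ => Ai (x + l) * Ai (y + l)) (Set.Ioi 0) ∧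
    Integrable (fun p : ℝ × ℝ =>
      Complex.exp ((wP p.2) ^ 3 / 3 - (vP p.1) ^ 3 / 3 - (x : ℂ) * wP p.2 + (y : ℂ) * vP p.1)
        / (wP p.2 - vP p.1) * wD p.2 * vD p.1) ∧
    ∫ l in Set.Ioi (0 : ℝ), Ai (x + l) * Ai (y + l)
      = (1 / (2 * (π : ℂ) * Complex.I)) ^ 2 *
          ∫ s : ℝ, ∫ t : ℝ,
            Complex.exp ((wP t) ^ 3 / 3 - (vP s) ^ 3 / 3 - (x : ℂ) * wP t + (y : ℂ) * vP s)
              / (wP t - vP s) * wD t * vD s := by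
  have hI := integrable_triple x y
  have hK := hI.integral_prod_right
  simp only [integral_shift] at hK
  refine ⟨fun s t h => ?_, ?_, hK, ?_⟩
  · have := two_le_re_sub s t
    rw [h, Complex.zero_re] at this
    linarith
  · simp_rw [Ai_mul_Ai]
    exact hI.integral_prod_left.const_mul _
  · simp_rw [Ai_mul_Ai]
    rw [integral_const_mul]
    congr 1
    calc _ = ∫ p : ℝ × ℝ, ∫ l in Set.Ioi (0 : ℝ), vInt (y + l) p.1 * wInt (x + l) p.2 :=
          integral_integral_swap hI
      _ = _ := by
          simp_rw [integral_shift]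
          exact integral_prod _ hK
end

section
/- (Lemma C.3.) Let γ : [0,1] → ℂ be a closed piecewise continuously differentiable curve with image C, let a ∈ (0,1), and set C⁽¹⁾ = γ([0,a]) and C⁽²⁾ = γ([a,1]), so C = C⁽¹⁾ ∪ C⁽²⁾. Let K : C × C → ℂ be continuous, and let ε > 0 satisfy |K(z, z′)| < ε for all z ∈ C⁽²⁾ and z′ ∈ C. For an interval I ∈ {[0,1], [0,a]}, define the Fredholm determinant D(I) = 1 + Σ_{k=1}^∞ (1/((2πi)^k · k!)) ∫_{I^k} det[ K(γ(t_i), γ(t_j)) ]_{i,j=1}^k · ∏_{i=1}^k γ′(t_i) dt_1⋯dt_k; these series converge absolutely. Then | D([0,1]) − D([0,a]) | ≤ ε·S, where S = Σ_{k=1}^∞ (k^{k/2}/(π^k · k!)) ∫_{[0,1]^k} ∏_{i=2}^k ( (1/k) Σ_{j=1}^k |K(γ(t_i), γ(t_j))|² )^{1/2} · ∏_{i=1}^k |γ′(t_i)| dt_1⋯dt_k, and this series also converges. -/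
/-!
The difference of the `n`-th terms of `D([0,1])` and `D([0,a])` is an integral over
`[0,1]ⁿ \ [0,a]ⁿ`, a set covered by the `n` regions `{tᵢ > a}`. The integrand is symmetric in the
variables (`fredIntegrand_comp_perm`), so each region contributes at most as much as `{t₀ > a}`.
There Hadamard's inequality (`norm_det_le_prod_sqrt`) bounds the determinant by `n^{n/2}` times the
product of the quadratic means of the rows, and the mean of row `0` is at most `ε`. The factor `n`
is at most `2ⁿ`, which is compensated by passing from `(2π)ⁿ` to `πⁿ`
(`norm_fredTerm_sub_le`). Summing over `n` gives the estimate.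

All three series are dominated by multiples of `∑ n^{n/2} Xⁿ / n!`, again by Hadamard's inequality
and the boundedness of the kernel on the compact set `C × C`
(`summable_sqrt_pow_mul_div_factorial`).
-/

open Real MeasureTheory

/-- The `k`-th term (`k ≥ 1`, here the matrix has size `k`) of the Fredholm determinant series
(Definition C.1, equation (C.1)) for the kernel `K` along the curve `γ` restricted to
parameter interval `[0,b]`:
`(1/((2πi)^k·k!)) ∫_{[0,b]^k} det[K(γ(t_i),γ(t_j))]_{i,j=1}^k ∏_i γ′(t_i) dt`. -/
noncomputable def fredTerm (γ γ' : ℝ → ℂ) (K : ℂ → ℂ → ℂ) (b : ℝ) (k : ℕ) : ℂ :=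
  (1 / ((2 * (π : ℂ) * Complex.I) ^ k * (Nat.factorial k : ℂ))) *
    ∫ t : Fin k → ℝ in Set.univ.pi (fun _ => Set.Icc (0 : ℝ) b),
      (Matrix.det (Matrix.of fun i j : Fin k => K (γ (t i)) (γ (t j)))) * ∏ i, γ' (t i)

/-- The Fredholm determinant `D([0,b]) = 1 + Σ_{k=1}^∞ fredTerm k`. -/
noncomputable def fredDet (γ γ' : ℝ → ℂ) (K : ℂ → ℂ → ℂ) (b : ℝ) : ℂ :=
  1 + ∑' k : ℕ, fredTerm γ γ' K b (k + 1)

/-- The term of size `k+1` in the majorizing series `S`: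
`((k+1)^{(k+1)/2}/(π^{k+1}(k+1)!)) ∫_{[0,1]^{k+1}}
∏_{i=2}^{k+1} ((1/(k+1)) Σ_j |K(γ(t_i),γ(t_j))|²)^{1/2} ∏_i |γ′(t_i)| dt`. -/
noncomputable def fredMajTerm (γ γ' : ℝ → ℂ) (K : ℂ → ℂ → ℂ) (k : ℕ) : ℝ :=
  (((k : ℝ) + 1) ^ (((k : ℝ) + 1) / 2) / (π ^ (k + 1) * (Nat.factorial (k + 1) : ℝ))) *
    ∫ t : Fin (k + 1) → ℝ in Set.univ.pi (fun _ => Set.Icc (0 : ℝ) 1),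
      (∏ i ∈ Finset.univ.erase (0 : Fin (k + 1)),
          Real.sqrt ((((k : ℝ) + 1))⁻¹ * ∑ j : Fin (k + 1), ‖K (γ (t i)) (γ (t j))‖ ^ 2)) *
        ∏ i, ‖γ' (t i)‖

/-! ### Hadamard's inequality and the majorant -/

/-- Hadamard's inequality for complex matrices: in the Gram–Schmidt basis of the rows the matrix is
triangular, so its determinant is a product of inner products, each bounded by Cauchy–Schwarz. -/
theorem norm_det_le_prod_sqrt {n : ℕ} (A : Matrix (Fin n) (Fin n) ℂ) :
    ‖A.det‖ ≤ ∏ i, √(∑ j, ‖A i j‖ ^ 2) := by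
  let f : Fin n → EuclideanSpace ℂ (Fin n) := fun i => WithLp.toLp 2 (A i)
  let e := EuclideanSpace.basisFun (Fin n) ℂ
  have hfin : Module.finrank ℂ (EuclideanSpace ℂ (Fin n)) = Fintype.card (Fin n) := by simp
  let b := InnerProductSpace.gramSchmidtOrthonormalBasis hfin f
  have h1 : e.toBasis.det f = A.det := by
    rw [Module.Basis.det_apply, ← Matrix.det_transpose]
    congr 1
  have h2 : e.toBasis.det f = e.toBasis.det b * b.toBasis.det f := by
    rw [Module.Basis.det_apply, Module.Basis.det_apply, Module.Basis.det_apply, ← Matrix.det_mul,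
      ← OrthonormalBasis.coe_toBasis b, Module.Basis.toMatrix_mul_toMatrix]
  have h3 : b.toBasis.det f = ∏ i, inner ℂ (b i) (f i) :=
    InnerProductSpace.gramSchmidtOrthonormalBasis_det hfin f
  rw [← h1, h2, norm_mul, OrthonormalBasis.det_to_matrix_orthonormalBasis, one_mul, h3, norm_prod]
  refine Finset.prod_le_prod (fun _ _ => norm_nonneg _) fun i _ => ?_
  calc ‖inner ℂ (b i) (f i)‖ ≤ ‖b i‖ * ‖f i‖ := norm_inner_le_norm _ _
    _ = √(∑ j, ‖A i j‖ ^ 2) := by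
      rw [b.orthonormal.1 i, one_mul, EuclideanSpace.norm_eq]

/-- Hadamard's inequality with the row norms replaced by quadratic means. -/
theorem norm_det_le_sqrt_pow_mul {k : ℕ} (A : Matrix (Fin (k + 1)) (Fin (k + 1)) ℂ) :
    ‖A.det‖ ≤ √((k : ℝ) + 1) ^ (k + 1) *
      ∏ i, √(((k : ℝ) + 1)⁻¹ * ∑ j, ‖A i j‖ ^ 2) := by
  refine (norm_det_le_prod_sqrt A).trans_eq ?_
  have hk : (0 : ℝ) < (k : ℝ) + 1 := by positivity
  have : √((k : ℝ) + 1) ^ (k + 1) = ∏ _i : Fin (k + 1), √((k : ℝ) + 1) := by simp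
  rw [this, ← Finset.prod_mul_distrib]
  refine Finset.prod_congr rfl fun i _ => ?_
  rw [← Real.sqrt_mul hk.le, mul_inv_cancel_left₀ hk.ne']

theorem sqrt_mean_sq_le {k : ℕ} {M : ℝ} (hM : 0 ≤ M) {v : Fin (k + 1) → ℂ}
    (hv : ∀ j, ‖v j‖ ≤ M) : √(((k : ℝ) + 1)⁻¹ * ∑ j, ‖v j‖ ^ 2) ≤ M := by
  rw [Real.sqrt_le_left hM, inv_mul_le_iff₀ (by positivity)]
  calc ∑ j, ‖v j‖ ^ 2 ≤ ∑ _j : Fin (k + 1), M ^ 2 :=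
        Finset.sum_le_sum fun j _ => pow_le_pow_left₀ (norm_nonneg _) (hv j) 2
    _ = _ := by simp

/-- Convergence of `∑ n^{n/2} Xⁿ / n!`: the square of `2ⁿ` times the `n`-th term is
`(nⁿ / n!) · ((4X²)ⁿ / n!) ≤ eⁿ (4X²)ⁿ / n! ≤ exp (4eX²)`. -/
theorem summable_sqrt_pow_mul_div_factorial {X : ℝ} (hX : 0 ≤ X) :
    Summable fun n : ℕ => √(n : ℝ) ^ n * X ^ n / (n.factorial : ℝ) := by
  have hgeo : Summable fun n : ℕ => √(rexp (rexp 1 * (4 * X ^ 2))) * (1 / 2 : ℝ) ^ n :=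
    (summable_geometric_of_lt_one (by norm_num) (by norm_num)).mul_left _
  refine Summable.of_nonneg_of_le (fun n => by positivity) (fun n => ?_) hgeo
  have hsq : (2 ^ n * (√(n : ℝ) ^ n * X ^ n / (n.factorial : ℝ))) ^ 2
      ≤ rexp (rexp 1 * (4 * X ^ 2)) := by
    calc (2 ^ n * (√(n : ℝ) ^ n * X ^ n / (n.factorial : ℝ))) ^ 2
        = ((n : ℝ) ^ n / n.factorial) * ((4 * X ^ 2) ^ n / n.factorial) := by
          have h : (√(n : ℝ) ^ n) ^ 2 = (n : ℝ) ^ n := by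
            rw [← pow_mul, mul_comm n 2, pow_mul, Real.sq_sqrt (Nat.cast_nonneg n)]
          have h4 : ((2 : ℝ) ^ n) ^ 2 = 4 ^ n := by
            rw [← pow_mul, mul_comm n 2, pow_mul]; norm_num
          rw [mul_pow, div_pow, mul_pow, h, h4, mul_pow, ← pow_mul, ← pow_mul, mul_comm n 2]
          ring
      _ ≤ rexp n * ((4 * X ^ 2) ^ n / n.factorial) := by
          gcongr
          exact Real.pow_div_factorial_le_exp _ (Nat.cast_nonneg n) n
      _ = (rexp 1 * (4 * X ^ 2)) ^ n / n.factorial := by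
          rw [mul_pow (rexp 1), ← Real.exp_nat_mul, mul_one, mul_div_assoc]
      _ ≤ _ := Real.pow_div_factorial_le_exp _ (by positivity) n
  have h := Real.le_sqrt_of_sq_le hsq
  rw [one_div, inv_pow, ← div_eq_mul_inv, le_div_iff₀ (by positivity), mul_comm]
  exact h

/-! ### Integration over cubes -/

/-- The parameter cube `[0,b]ⁿ`. -/
abbrev cube (n : ℕ) (b : ℝ) : Set (Fin n → ℝ) := Set.univ.pi fun _ => Set.Icc 0 b

theorem measurableSet_cube (n : ℕ) (b : ℝ) : MeasurableSet (cube n b) :=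
  MeasurableSet.univ_pi fun _ => measurableSet_Icc

theorem volume_cube_lt_top (n : ℕ) (b : ℝ) : volume (cube n b) < ⊤ :=
  (isCompact_univ_pi fun _ => isCompact_Icc).measure_lt_top

theorem volume_real_cube_le_one (n : ℕ) {b : ℝ} (hb : b ≤ 1) : volume.real (cube n b) ≤ 1 := by
  rw [measureReal_def, volume_pi_pi]
  refine ENNReal.toReal_le_of_le_ofReal zero_le_one ?_
  simp only [Real.volume_Icc, sub_zero, ENNReal.ofReal_one]
  exact Finset.prod_le_one' fun _ _ => by simpa using ENNReal.ofReal_le_ofReal hb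

theorem integrableOn_cube {n : ℕ} {E : Type*} [NormedAddCommGroup E] {b C : ℝ}
    {f : (Fin n → ℝ) → E} (hf : StronglyMeasurable f) (hC : ∀ t, ‖f t‖ ≤ C) :
    IntegrableOn f (cube n b) :=
  Measure.integrableOn_of_bounded (volume_cube_lt_top n b).ne hf.aestronglyMeasurable
    (Filter.Eventually.of_forall hC)

theorem setIntegral_cube_comp_perm {n : ℕ} (σ : Equiv.Perm (Fin n)) (b : ℝ)
    (G : (Fin n → ℝ) → ℝ) :
    ∫ t in cube n b, G (t ∘ σ) = ∫ t in cube n b, G t := by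
  have hmp := volume_measurePreserving_piCongrLeft (fun _ : Fin n => ℝ) σ.symm
  have he : ∀ t, MeasurableEquiv.piCongrLeft (fun _ : Fin n => ℝ) σ.symm t = t ∘ σ := by
    intro t
    funext i
    obtain ⟨j, rfl⟩ := σ.symm.surjective i
    rw [MeasurableEquiv.piCongrLeft_apply_apply]
    simp
  have h := hmp.setIntegral_preimage_emb (MeasurableEquiv.measurableEmbedding _) G (cube n b)
  simp only [he] at h
  rw [← h]
  congr 2
  ext t
  simp only [cube, Set.mem_univ_pi, Set.mem_preimage, he, Function.comp]
  exact ⟨fun h i => h _, fun h i => by simpa using h (σ.symm i)⟩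

/-! ### The terms of the series, for a globally defined curve -/

/-- The integrand of `fredTerm` of size `n`. -/
noncomputable def fredIntegrand (γ γ' : ℝ → ℂ) (K : ℂ → ℂ → ℂ) (n : ℕ) (t : Fin n → ℝ) : ℂ :=
  (Matrix.det (Matrix.of fun i j : Fin n => K (γ (t i)) (γ (t j)))) * ∏ i, γ' (t i)

/-- The integrand of `fredMajTerm`; the row of index `0` is left out of the product of means. -/
noncomputable def majIntegrand (γ γ' : ℝ → ℂ) (K : ℂ → ℂ → ℂ) (k : ℕ) (t : Fin (k + 1) → ℝ) : ℝ :=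
  (∏ i ∈ Finset.univ.erase (0 : Fin (k + 1)),
      √((((k : ℝ) + 1))⁻¹ * ∑ j : Fin (k + 1), ‖K (γ (t i)) (γ (t j))‖ ^ 2)) * ∏ i, ‖γ' (t i)‖

section bounds

variable {γ γ' : ℝ → ℂ} {K : ℂ → ℂ → ℂ}

theorem fredTerm_eq (b : ℝ) (n : ℕ) : fredTerm γ γ' K b n =
    (1 / ((2 * (π : ℂ) * Complex.I) ^ n * (Nat.factorial n : ℂ))) *
      ∫ t in cube n b, fredIntegrand γ γ' K n t := rfl

theorem fredMajTerm_eq (k : ℕ) : fredMajTerm γ γ' K k =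
    (√((k : ℝ) + 1) ^ (k + 1) / (π ^ (k + 1) * (Nat.factorial (k + 1) : ℝ))) *
      ∫ t in cube (k + 1) 1, majIntegrand γ γ' K k t := by
  have : ((k : ℝ) + 1) ^ (((k : ℝ) + 1) / 2) = √((k : ℝ) + 1) ^ (k + 1) := by
    rw [Real.sqrt_eq_rpow, ← Real.rpow_natCast, ← Real.rpow_mul (by positivity)]
    congr 1
    push_cast
    ring
  rw [← this]
  rfl

theorem norm_fredPrefactor (n : ℕ) :
    ‖1 / ((2 * (π : ℂ) * Complex.I) ^ n * (Nat.factorial n : ℂ))‖ =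
      1 / ((2 * π) ^ n * n.factorial) := by
  simp [abs_of_pos Real.pi_pos]

/-- The integrand is symmetric: permuting the variables permutes rows and columns of the matrix
simultaneously. -/
theorem fredIntegrand_comp_perm {n : ℕ} (σ : Equiv.Perm (Fin n)) (t : Fin n → ℝ) :
    fredIntegrand γ γ' K n (t ∘ σ) = fredIntegrand γ γ' K n t := by
  unfold fredIntegrand
  congr 1
  · exact Matrix.det_submatrix_equiv_self σ (Matrix.of fun i j : Fin n => K (γ (t i)) (γ (t j)))
  · exact Equiv.prod_comp σ fun i => γ' (t i)

theorem stronglyMeasurable_fredIntegrand (hk : Continuous fun p : ℝ × ℝ => K (γ p.1) (γ p.2))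
    (hg : Measurable γ') (n : ℕ) : StronglyMeasurable (fredIntegrand γ γ' K n) := by
  have h1 : Continuous fun t : Fin n → ℝ =>
      Matrix.det (Matrix.of fun i j : Fin n => K (γ (t i)) (γ (t j))) :=
    Continuous.matrix_det (continuous_matrix fun i j =>
      hk.comp (g := fun p : ℝ × ℝ => K (γ p.1) (γ p.2)) (f := fun t : Fin n → ℝ => (t i, t j))
        ((continuous_apply i).prodMk (continuous_apply j)))
  have h2 : Measurable fun t : Fin n → ℝ => ∏ i, γ' (t i) :=
    Finset.measurable_prod _ fun i _ => hg.comp (measurable_pi_apply i)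
  exact h1.stronglyMeasurable.mul h2.stronglyMeasurable

theorem stronglyMeasurable_majIntegrand (hk : Continuous fun p : ℝ × ℝ => K (γ p.1) (γ p.2))
    (hg : Measurable γ') (k : ℕ) : StronglyMeasurable (majIntegrand γ γ' K k) := by
  have hk' : ∀ i j : Fin (k + 1), Continuous fun t : Fin (k + 1) → ℝ => K (γ (t i)) (γ (t j)) :=
    fun i j => hk.comp (g := fun p : ℝ × ℝ => K (γ p.1) (γ p.2))
      (f := fun t : Fin (k + 1) → ℝ => (t i, t j)) ((continuous_apply i).prodMk (continuous_apply j))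
  have h1 : Continuous fun t : Fin (k + 1) → ℝ => ∏ i ∈ Finset.univ.erase (0 : Fin (k + 1)),
      √((((k : ℝ) + 1))⁻¹ * ∑ j : Fin (k + 1), ‖K (γ (t i)) (γ (t j))‖ ^ 2) :=
    continuous_finsetProd _ fun i _ => (continuous_const.mul
      (continuous_finsetSum _ fun j _ => (hk' i j).norm.pow 2)).sqrt
  have h2 : Measurable fun t : Fin (k + 1) → ℝ => ∏ i, ‖γ' (t i)‖ :=
    Finset.measurable_prod _ fun i _ => (hg.comp (measurable_pi_apply i)).norm
  exact h1.stronglyMeasurable.mul h2.stronglyMeasurable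

theorem majIntegrand_nonneg (k : ℕ) (t : Fin (k + 1) → ℝ) : 0 ≤ majIntegrand γ γ' K k t := by
  unfold majIntegrand
  positivity

theorem majIntegrand_le {M B : ℝ} (hM1 : 1 ≤ M)
    (hM : ∀ s t, ‖K (γ s) (γ t)‖ ≤ M) (hB : ∀ t, ‖γ' t‖ ≤ B) (k : ℕ) (t : Fin (k + 1) → ℝ) :
    majIntegrand γ γ' K k t ≤ (M * B) ^ (k + 1) := by
  have hM0 : 0 ≤ M := zero_le_one.trans hM1
  have h1 : (∏ i ∈ Finset.univ.erase (0 : Fin (k + 1)),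
      √((((k : ℝ) + 1))⁻¹ * ∑ j : Fin (k + 1), ‖K (γ (t i)) (γ (t j))‖ ^ 2)) ≤ M ^ (k + 1) := by
    calc _ ≤ ∏ i ∈ Finset.univ.erase (0 : Fin (k + 1)), M :=
          Finset.prod_le_prod (fun _ _ => Real.sqrt_nonneg _)
            fun i _ => sqrt_mean_sq_le hM0 fun j => hM _ _
      _ = M ^ k := by simp
      _ ≤ M ^ (k + 1) := pow_le_pow_right₀ hM1 k.le_succ
  have h2 : ∏ i, ‖γ' (t i)‖ ≤ B ^ (k + 1) := by
    calc _ ≤ ∏ _i : Fin (k + 1), B :=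
          Finset.prod_le_prod (fun _ _ => norm_nonneg _) fun i _ => hB _
      _ = _ := by simp
  rw [mul_pow]
  exact mul_le_mul h1 h2 (Finset.prod_nonneg fun _ _ => norm_nonneg _) (by positivity)

/-- Hadamard's inequality, with the row of index `0` bounded by `δ`. -/
theorem norm_fredIntegrand_le_maj {δ : ℝ} (hδ : 0 ≤ δ) {k : ℕ} {t : Fin (k + 1) → ℝ}
    (h : ∀ s, ‖K (γ (t 0)) (γ s)‖ ≤ δ) :
    ‖fredIntegrand γ γ' K (k + 1) t‖ ≤
      √((k : ℝ) + 1) ^ (k + 1) * (δ * majIntegrand γ γ' K k t) := by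
  unfold fredIntegrand majIntegrand
  rw [norm_mul, norm_prod, ← mul_assoc δ, ← mul_assoc]
  refine mul_le_mul_of_nonneg_right ?_ (Finset.prod_nonneg fun _ _ => norm_nonneg _)
  refine (norm_det_le_sqrt_pow_mul _).trans ?_
  refine mul_le_mul_of_nonneg_left ?_ (by positivity)
  rw [← Finset.mul_prod_erase _ _ (Finset.mem_univ (0 : Fin (k + 1)))]
  refine mul_le_mul_of_nonneg_right ?_ (Finset.prod_nonneg fun _ _ => Real.sqrt_nonneg _)
  exact sqrt_mean_sq_le hδ fun j => h _

theorem norm_fredIntegrand_le {M B : ℝ} (hM1 : 1 ≤ M)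
    (hM : ∀ s t, ‖K (γ s) (γ t)‖ ≤ M) (hB : ∀ t, ‖γ' t‖ ≤ B) (k : ℕ) (t : Fin (k + 1) → ℝ) :
    ‖fredIntegrand γ γ' K (k + 1) t‖ ≤ √((k : ℝ) + 1) ^ (k + 1) * (M * (M * B) ^ (k + 1)) := by
  have hM0 : 0 ≤ M := zero_le_one.trans hM1
  refine (norm_fredIntegrand_le_maj hM0 fun s => hM _ _).trans ?_
  gcongr
  exact majIntegrand_le hM1 hM hB k t

/-- A common convergent majorant for the three series. -/
theorem summable_bound {M B : ℝ} (hM1 : 1 ≤ M) (hB0 : 0 ≤ B) :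
    Summable fun k : ℕ =>
      M * (√((k : ℝ) + 1) ^ (k + 1) * (M * B) ^ (k + 1) / ((k + 1).factorial : ℝ)) := by
  have h := (summable_nat_add_iff 1).2
    (summable_sqrt_pow_mul_div_factorial (X := M * B) (by positivity))
  simpa only [Nat.cast_add, Nat.cast_one] using h.mul_left M

theorem summable_norm_fredTerm {M B b : ℝ} (hM1 : 1 ≤ M) (hB0 : 0 ≤ B)
    (hM : ∀ s t, ‖K (γ s) (γ t)‖ ≤ M) (hB : ∀ t, ‖γ' t‖ ≤ B) (hb : b ≤ 1) :
    Summable fun k : ℕ => ‖fredTerm γ γ' K b (k + 1)‖ := by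
  have hM0 : 0 ≤ M := zero_le_one.trans hM1
  refine Summable.of_nonneg_of_le (fun _ => norm_nonneg _) (fun k => ?_) (summable_bound hM1 hB0)
  set C := √((k : ℝ) + 1) ^ (k + 1) * (M * (M * B) ^ (k + 1)) with hC
  have hC0 : 0 ≤ C := by positivity
  have hint : ‖∫ t in cube (k + 1) b, fredIntegrand γ γ' K (k + 1) t‖ ≤ C := by
    refine (norm_setIntegral_le_of_norm_le_const (volume_cube_lt_top _ _)
      fun t _ => norm_fredIntegrand_le hM1 hM hB k t).trans ?_
    exact mul_le_of_le_one_right hC0 (volume_real_cube_le_one _ hb)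
  rw [fredTerm_eq, norm_mul, norm_fredPrefactor]
  have hpi : (1 : ℝ) ≤ (2 * π) ^ (k + 1) := one_le_pow₀ (by linarith [Real.pi_gt_three])
  calc _ ≤ 1 / (1 * ((k + 1).factorial : ℝ)) * C := by gcongr
    _ = _ := by rw [hC]; ring

theorem summable_fredMajTerm {M B : ℝ} (hM1 : 1 ≤ M) (hB0 : 0 ≤ B)
    (hM : ∀ s t, ‖K (γ s) (γ t)‖ ≤ M) (hB : ∀ t, ‖γ' t‖ ≤ B) :
    Summable fun k : ℕ => fredMajTerm γ γ' K k := by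
  have hM0 : 0 ≤ M := zero_le_one.trans hM1
  refine Summable.of_nonneg_of_le (fun k => ?_) (fun k => ?_) (summable_bound hM1 hB0)
  · rw [fredMajTerm_eq]
    exact mul_nonneg (by positivity) (integral_nonneg fun t => majIntegrand_nonneg k t)
  have hint : ∫ t in cube (k + 1) 1, majIntegrand γ γ' K k t ≤ (M * B) ^ (k + 1) := by
    refine (Real.le_norm_self _).trans ((norm_setIntegral_le_of_norm_le_const
      (volume_cube_lt_top _ _) (C := (M * B) ^ (k + 1)) fun t _ => ?_).trans ?_)
    · rw [Real.norm_of_nonneg (majIntegrand_nonneg k t)]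
      exact majIntegrand_le hM1 hM hB k t
    · exact mul_le_of_le_one_right (by positivity) (volume_real_cube_le_one _ le_rfl)
  rw [fredMajTerm_eq]
  have hpi : (1 : ℝ) ≤ π ^ (k + 1) := one_le_pow₀ (by linarith [Real.pi_gt_three])
  calc _ ≤ √((k : ℝ) + 1) ^ (k + 1) / (1 * ((k + 1).factorial : ℝ)) * (M * B) ^ (k + 1) := by
        gcongr
        exact integral_nonneg fun t => majIntegrand_nonneg k t
    _ = 1 * (√((k : ℝ) + 1) ^ (k + 1) * (M * B) ^ (k + 1) / ((k + 1).factorial : ℝ)) := by ring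
    _ ≤ _ := by gcongr

/-- The termwise estimate. The factor `k + 1` produced by the union bound over the variable lying
in `(a,1]` is absorbed by `2 ^ (k + 1)`, which turns `(2π)^{k+1}` into `π^{k+1}`. -/
theorem norm_fredTerm_sub_le {M B a ε : ℝ} (hM1 : 1 ≤ M)
    (hM : ∀ s t, ‖K (γ s) (γ t)‖ ≤ M) (hB : ∀ t, ‖γ' t‖ ≤ B)
    (hk : Continuous fun p : ℝ × ℝ => K (γ p.1) (γ p.2)) (hg : Measurable γ')
    (ha : a ≤ 1) (hε : 0 ≤ ε) (hs : ∀ s, a < s → ∀ t, ‖K (γ s) (γ t)‖ ≤ ε) (k : ℕ) :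
    ‖fredTerm γ γ' K 1 (k + 1) - fredTerm γ γ' K a (k + 1)‖ ≤ ε * fredMajTerm γ γ' K k := by
  set f := fredIntegrand γ γ' K (k + 1) with hf
  set R := √((k : ℝ) + 1) ^ (k + 1) with hR
  set C := R * (M * (M * B) ^ (k + 1)) with hC
  have hfm : StronglyMeasurable f := stronglyMeasurable_fredIntegrand hk hg _
  have hfC : ∀ t, ‖f t‖ ≤ C := norm_fredIntegrand_le hM1 hM hB k
  let H : Fin (k + 1) → Set (Fin (k + 1) → ℝ) := fun i => {t | a < t i}
  have hH : ∀ i, MeasurableSet (H i) := fun i =>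
    measurableSet_lt measurable_const (measurable_pi_apply i)
  let G : Fin (k + 1) → (Fin (k + 1) → ℝ) → ℝ := fun i => (H i).indicator fun t => ‖f t‖
  have hGint : ∀ i, IntegrableOn (G i) (cube (k + 1) 1) := fun i =>
    (integrableOn_cube hfm.norm fun t => by simpa using hfC t).indicator (hH i)
  have hfint : IntegrableOn f (cube (k + 1) 1) := integrableOn_cube hfm hfC
  have hsub : cube (k + 1) a ⊆ cube (k + 1) 1 :=
    Set.pi_mono fun _ _ => Set.Icc_subset_Icc_right ha
  have hdiff : ∫ t in cube (k + 1) 1, f t - (cube (k + 1) a).indicator f t =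
      (∫ t in cube (k + 1) 1, f t) - ∫ t in cube (k + 1) a, f t := by
    rw [integral_sub hfint (hfint.indicator (measurableSet_cube _ _)),
      setIntegral_indicator (measurableSet_cube _ _), Set.inter_eq_right.2 hsub]
  -- A point of the large cube outside the small one has a coordinate exceeding `a`.
  have hunion : ‖∫ t in cube (k + 1) 1, f t - (cube (k + 1) a).indicator f t‖ ≤
      ∫ t in cube (k + 1) 1, ∑ i, G i t := by
    refine norm_integral_le_of_norm_le (integrable_finsetSum _ fun i _ => hGint i) ?_
    refine (ae_restrict_iff' (measurableSet_cube _ _)).2 (Filter.Eventually.of_forall fun t ht => ?_)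
    have hGnn : ∀ i, 0 ≤ G i t := fun i => Set.indicator_nonneg (fun _ _ => norm_nonneg _) t
    by_cases hta : t ∈ cube (k + 1) a
    · rw [Set.indicator_of_mem hta, sub_self, norm_zero]
      exact Finset.sum_nonneg fun i _ => hGnn i
    · rw [Set.indicator_of_notMem hta, sub_zero]
      obtain ⟨i, hi⟩ : ∃ i, a < t i := by
        by_contra! hcon
        exact hta fun i _ => ⟨(ht i trivial).1, hcon i⟩
      calc ‖f t‖ = G i t := (Set.indicator_of_mem (s := H i) hi fun t => ‖f t‖).symm
        _ ≤ _ := Finset.single_le_sum (fun i _ => hGnn i) (Finset.mem_univ i)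
  have hsymm : ∀ i, ∫ t in cube (k + 1) 1, G i t = ∫ t in cube (k + 1) 1, G 0 t := by
    intro i
    rw [← setIntegral_cube_comp_perm (Equiv.swap 0 i) 1 (G 0)]
    congr 1
    funext t
    simp only [G, H, Set.indicator, Set.mem_ofPred_eq, Function.comp_apply, Equiv.swap_apply_left,
      hf, fredIntegrand_comp_perm]
  have hG0 : ∫ t in cube (k + 1) 1, G 0 t ≤
      R * (ε * ∫ t in cube (k + 1) 1, majIntegrand γ γ' K k t) := by
    rw [← integral_const_mul, ← integral_const_mul]
    refine integral_mono (hGint 0) (((integrableOn_cube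
      (C := (M * B) ^ (k + 1)) (stronglyMeasurable_majIntegrand hk hg k) fun t => ?_).const_mul ε).const_mul R) fun t => ?_
    · rw [Real.norm_of_nonneg (majIntegrand_nonneg k t)]
      exact majIntegrand_le hM1 hM hB k t
    · have hnn : 0 ≤ R * (ε * majIntegrand γ γ' K k t) := by
        have := majIntegrand_nonneg (γ := γ) (γ' := γ') (K := K) k t
        positivity
      refine Set.indicator_apply_le' (fun h => ?_) fun _ => hnn
      exact norm_fredIntegrand_le_maj hε (hs _ h)
  set J := ∫ t in cube (k + 1) 1, majIntegrand γ γ' K k t with hJ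
  have hJ0 : 0 ≤ J := integral_nonneg fun t => majIntegrand_nonneg k t
  have hmain : ‖(∫ t in cube (k + 1) 1, f t) - ∫ t in cube (k + 1) a, f t‖ ≤
      ((k : ℝ) + 1) * (R * (ε * J)) := by
    rw [← hdiff]
    refine hunion.trans ?_
    rw [integral_finsetSum _ fun i _ => hGint i, Finset.sum_congr rfl fun i _ => hsymm i]
    simp only [Finset.sum_const, Finset.card_univ, Fintype.card_fin, nsmul_eq_mul]
    push_cast
    gcongr
  have htwo : ((k : ℝ) + 1) ≤ 2 ^ (k + 1) := by
    exact_mod_cast (Nat.lt_two_pow_self (n := k + 1)).le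
  rw [fredTerm_eq, fredTerm_eq, ← mul_sub, norm_mul, norm_fredPrefactor, fredMajTerm_eq]
  calc _ ≤ 1 / ((2 * π) ^ (k + 1) * ((k + 1).factorial : ℝ)) *
        (2 ^ (k + 1) * (R * (ε * J))) := by
        gcongr
        exact hmain.trans (by gcongr)
    _ = _ := by
        rw [mul_pow, ← hR, ← hJ]
        field_simp

end bounds

/-! ### Reduction to a globally defined curve -/

theorem fredTerm_congr {γ₁ γ₂ γ₁' γ₂' : ℝ → ℂ} {K : ℂ → ℂ → ℂ} {b : ℝ}
    (h : Set.EqOn γ₁ γ₂ (Set.Icc 0 b)) (h' : Set.EqOn γ₁' γ₂' (Set.Icc 0 b)) (n : ℕ) :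
    fredTerm γ₁ γ₁' K b n = fredTerm γ₂ γ₂' K b n := by
  unfold fredTerm
  congr 1
  refine setIntegral_congr_fun (measurableSet_cube n b) fun t ht => ?_
  simp only [fun i => h (ht i trivial), fun i => h' (ht i trivial)]

theorem fredMajTerm_congr {γ₁ γ₂ γ₁' γ₂' : ℝ → ℂ} {K : ℂ → ℂ → ℂ}
    (h : Set.EqOn γ₁ γ₂ (Set.Icc 0 1)) (h' : Set.EqOn γ₁' γ₂' (Set.Icc 0 1)) (k : ℕ) :
    fredMajTerm γ₁ γ₁' K k = fredMajTerm γ₂ γ₂' K k := by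
  unfold fredMajTerm
  congr 1
  refine setIntegral_congr_fun (measurableSet_cube (k + 1) 1) fun t ht => ?_
  simp only [fun i => h (ht i trivial), fun i => h' (ht i trivial)]

/-- A piecewise continuous function, cut off outside its domain, is Borel measurable, whatever its
values at the finitely many exceptional points. -/
theorem measurable_indicator_of_continuousOn_diff_finset {g : ℝ → ℂ} {s : Set ℝ}
    (hs : MeasurableSet s) (F : Finset ℝ) (hg : ContinuousOn g (s \ F)) :
    Measurable (s.indicator g) := by
  classical
  have hF : MeasurableSet (F : Set ℝ) := F.measurableSet
  have h1 : Measurable ((s \ (F : Set ℝ)).indicator g) := by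
    rw [← Set.piecewise_eq_indicator]
    exact hg.measurable_piecewise continuousOn_const (hs.diff hF)
  refine h1.measurable_of_countable_ne (F.countable_toSet.mono fun x hx => ?_)
  by_contra hxF
  refine hx ?_
  by_cases hxs : x ∈ s
  · rw [Set.indicator_of_mem hxs, Set.indicator_of_mem (show x ∈ s \ (F : Set ℝ) from ⟨hxs, hxF⟩)]
  · rw [Set.indicator_of_notMem hxs, Set.indicator_of_notMem fun h => hxs h.1]

/-- Lemma C.3: let `γ : [0,1] → ℂ` be a closed piecewise continuously differentiable curve
with image `C` (with derivative `γ′` away from a finite set, `γ′` bounded), `a ∈ (0,1)`,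
`C⁽¹⁾ = γ([0,a])`, `C⁽²⁾ = γ([a,1])`, and let `K` be continuous on `C × C` with
`|K(z,z′)| < ε` for `z ∈ C⁽²⁾`, `z′ ∈ C`. Then the Fredholm determinant series `D([0,1])`,
`D([0,a])` and the majorizing series `S` converge absolutely, and
`|D([0,1]) − D([0,a])| ≤ ε·S`. -/
theorem stmt11 (γ γ' : ℝ → ℂ) (a : ℝ) (ha : a ∈ Set.Ioo (0 : ℝ) 1)
    (hγ : ContinuousOn γ (Set.Icc 0 1))
    (hclosed : γ 0 = γ 1)
    (hpc : ∃ F : Finset ℝ,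
      (∀ t ∈ Set.Icc (0 : ℝ) 1 \ (F : Set ℝ), HasDerivAt γ (γ' t) t) ∧
        ContinuousOn γ' (Set.Icc (0 : ℝ) 1 \ (F : Set ℝ)))
    (hbdd : ∃ B : ℝ, ∀ t ∈ Set.Icc (0 : ℝ) 1, ‖γ' t‖ ≤ B)
    (K : ℂ → ℂ → ℂ)
    (hK : ContinuousOn (fun p : ℂ × ℂ => K p.1 p.2)
      ((γ '' Set.Icc 0 1) ×ˢ (γ '' Set.Icc 0 1)))
    (ε : ℝ) (hε : 0 < ε)
    (hsmall : ∀ z ∈ γ '' Set.Icc a 1, ∀ z' ∈ γ '' Set.Icc 0 1, ‖K z z'‖ < ε) :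
    Summable (fun k : ℕ => ‖fredTerm γ γ' K 1 (k + 1)‖) ∧
    Summable (fun k : ℕ => ‖fredTerm γ γ' K a (k + 1)‖) ∧
    Summable (fun k : ℕ => fredMajTerm γ γ' K k) ∧
    ‖fredDet γ γ' K 1 - fredDet γ γ' K a‖ ≤ ε * ∑' k : ℕ, fredMajTerm γ γ' K k := by
  obtain ⟨F, -, hFc⟩ := hpc
  obtain ⟨B, hB⟩ := hbdd
  -- `γ` and `γ'` are extended from `[0,1]` to a globally continuous curve and a globally
  -- measurable bounded function; no integral sees the difference.
  let p : ℝ → ℝ := fun s => Set.projIcc (0 : ℝ) 1 zero_le_one s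
  let c : ℝ → ℂ := fun s => γ (p s)
  let g : ℝ → ℂ := (Set.Icc (0 : ℝ) 1).indicator γ'
  have hp : ∀ s, p s ∈ Set.Icc (0 : ℝ) 1 := fun s => (Set.projIcc (0 : ℝ) 1 zero_le_one s).2
  have hpc : Continuous p := continuous_subtype_val.comp continuous_projIcc
  have hpid : ∀ s ∈ Set.Icc (0 : ℝ) 1, p s = s := fun s h => by
    simp only [p, Set.projIcc_of_mem zero_le_one h]
  have hcc : Continuous c := hγ.comp_continuous hpc hp
  have hcmem : ∀ s, c s ∈ γ '' Set.Icc 0 1 := fun s => ⟨p s, hp s, rfl⟩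
  have hceq : Set.EqOn γ c (Set.Icc 0 1) := fun s h => by simp only [c, hpid s h]
  have hgeq : Set.EqOn γ' g (Set.Icc 0 1) := fun s h => (Set.indicator_of_mem h _).symm
  have hk : Continuous fun q : ℝ × ℝ => K (c q.1) (c q.2) :=
    hK.comp_continuous ((hcc.comp continuous_fst).prodMk (hcc.comp continuous_snd))
      fun q => ⟨hcmem _, hcmem _⟩
  have hg : Measurable g := measurable_indicator_of_continuousOn_diff_finset measurableSet_Icc F hFc
  have hB0 : 0 ≤ B := (norm_nonneg _).trans (hB 0 ⟨le_rfl, zero_le_one⟩)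
  have hgB : ∀ t, ‖g t‖ ≤ B := fun t => by
    by_cases ht : t ∈ Set.Icc (0 : ℝ) 1
    · rw [← hgeq ht]; exact hB t ht
    · simpa only [g, Set.indicator_of_notMem ht, norm_zero] using hB0
  have hcomp : IsCompact (γ '' Set.Icc 0 1) := isCompact_Icc.image_of_continuousOn hγ
  obtain ⟨M₀, hM₀⟩ := (hcomp.prod hcomp).exists_bound_of_continuousOn hK
  have hM : ∀ s t, ‖K (c s) (c t)‖ ≤ max 1 M₀ := fun s t =>
    (hM₀ (c s, c t) ⟨hcmem s, hcmem t⟩).trans (le_max_right _ _)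
  have hM1 : (1 : ℝ) ≤ max 1 M₀ := le_max_left _ _
  have hs : ∀ s, a < s → ∀ t, ‖K (c s) (c t)‖ ≤ ε := fun s h t => by
    refine (hsmall (c s) ⟨p s, ⟨?_, (hp s).2⟩, rfl⟩ (c t) (hcmem t)).le
    simp only [p, Set.coe_projIcc]
    exact le_max_of_le_right (le_min ha.2.le h.le)
  have h1 : ∀ n, fredTerm γ γ' K 1 n = fredTerm c g K 1 n := fredTerm_congr hceq hgeq
  have ha' : Set.Icc 0 a ⊆ Set.Icc (0 : ℝ) 1 := Set.Icc_subset_Icc_right ha.2.le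
  have h2 : ∀ n, fredTerm γ γ' K a n = fredTerm c g K a n :=
    fredTerm_congr (hceq.mono ha') (hgeq.mono ha')
  have h3 : ∀ k, fredMajTerm γ γ' K k = fredMajTerm c g K k := fredMajTerm_congr hceq hgeq
  have S1 := summable_norm_fredTerm hM1 hB0 hM hgB (le_refl (1 : ℝ))
  have S2 := summable_norm_fredTerm hM1 hB0 hM hgB ha.2.le
  have S3 := summable_fredMajTerm hM1 hB0 hM hgB
  unfold fredDet
  simp only [h1, h2, h3]
  refine ⟨S1, S2, S3, ?_⟩
  rw [add_sub_add_left_eq_sub, ← S1.of_norm.tsum_sub S2.of_norm, ← tsum_mul_left]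
  exact tsum_of_norm_bounded (S3.mul_left ε).hasSum
    (norm_fredTerm_sub_le hM1 hM hgB hk hg ha.2.le hε.le hs)
end

section
/- For every real number a > 0 there exists b > 0 such that for every integer j ≥ 1, Σ_{k=1}^∞ (a/k)^{k/2} · binom(k + j, j) ≤ b^j (in particular, the series converges). (This summation estimate is established in the proof of Lemma 4.2 to show that the coefficient of β₂^j in the Fredholm determinant expansion is at most exponentially large in j: after Hadamard's inequality, the coefficient of β₂^j in the k-th term of the Fredholm series is bounded by C^j k^{k/2} binom(k+j,j)/k!, and summing over k yields the geometric bound.) -/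
/-!
Since `binom(k + j, j) ≤ 2 ^ (k + j)`, the series is dominated by `2 ^ j` times
`S = Σ (a / k) ^ (k / 2) * 2 ^ k`. The latter converges, because for `k ≥ 16 a` its terms are at
most `(1 / 16) ^ (k / 2) * 2 ^ k = (1 / 2) ^ k`. As `j ≥ 1`, one may take `b = (S + 1) * 2`.
-/

/-- Convergence of the dominating series, with the index shifted so that it starts at `k = 0`. -/
lemma summable_rpow_mul_two_pow (a : ℝ) (ha : 0 < a) :
    Summable (fun k : ℕ =>
      (a / ((k : ℝ) + 1)) ^ (((k : ℝ) + 1) / 2) * (2 : ℝ) ^ (k + 1)) := by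
  have hg : Summable (fun k : ℕ => (1 / 2 : ℝ) ^ (k + 1)) :=
    (summable_nat_add_iff 1).2 summable_geometric_two
  refine hg.of_norm_bounded_eventually_nat ?_
  filter_upwards [Filter.eventually_ge_atTop ⌈16 * a⌉₊] with k hk
  have hka : 16 * a ≤ k := Nat.ceil_le.1 hk
  have hbase : a / ((k : ℝ) + 1) ≤ 1 / 16 := by
    rw [div_le_iff₀ (by positivity)]
    linarith
  have hpow : (1 / 16 : ℝ) ^ (((k : ℝ) + 1) / 2) = (1 / 4) ^ (k + 1) := by
    rw [show (1 / 16 : ℝ) = (1 / 4) ^ (2 : ℝ) by norm_num, ← Real.rpow_mul (by norm_num),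
      ← Real.rpow_natCast]
    congr 1
    push_cast
    ring
  rw [Real.norm_of_nonneg (by positivity)]
  calc (a / ((k : ℝ) + 1)) ^ (((k : ℝ) + 1) / 2) * (2 : ℝ) ^ (k + 1)
      ≤ (1 / 16) ^ (((k : ℝ) + 1) / 2) * (2 : ℝ) ^ (k + 1) := by gcongr
    _ = (1 / 2) ^ (k + 1) := by
      rw [hpow, ← mul_pow]
      norm_num

/-- Summation estimate from the proof of Lemma 4.2: for every `a > 0` there exists `b > 0`
such that for every integer `j ≥ 1`, the series `Σ_{k=1}^∞ (a/k)^{k/2}·binom(k+j,j)`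
converges and is at most `b^j`. -/
theorem stmt17 (a : ℝ) (ha : 0 < a) :
    ∃ b : ℝ, 0 < b ∧ ∀ j : ℕ, 1 ≤ j →
      Summable (fun k : ℕ =>
        (a / ((k : ℝ) + 1)) ^ (((k : ℝ) + 1) / 2) * (Nat.choose (k + 1 + j) j : ℝ)) ∧
      ∑' k : ℕ, (a / ((k : ℝ) + 1)) ^ (((k : ℝ) + 1) / 2) * (Nat.choose (k + 1 + j) j : ℝ)
        ≤ b ^ j := by
  have hS := summable_rpow_mul_two_pow a ha
  set S : ℝ := ∑' k : ℕ, (a / ((k : ℝ) + 1)) ^ (((k : ℝ) + 1) / 2) * (2 : ℝ) ^ (k + 1) with hSdef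
  have hS0 : 0 ≤ S := tsum_nonneg fun k => by positivity
  refine ⟨(S + 1) * 2, by positivity, fun j hj => ?_⟩
  have hle : ∀ k : ℕ,
      (a / ((k : ℝ) + 1)) ^ (((k : ℝ) + 1) / 2) * (Nat.choose (k + 1 + j) j : ℝ) ≤
        (a / ((k : ℝ) + 1)) ^ (((k : ℝ) + 1) / 2) * (2 : ℝ) ^ (k + 1) * 2 ^ j := fun k => by
    rw [mul_assoc, ← pow_add]
    gcongr
    exact_mod_cast Nat.choose_le_two_pow (k + 1 + j) j
  have hsum := Summable.of_nonneg_of_le (fun k => by positivity) hle (hS.mul_right (2 ^ j))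
  refine ⟨hsum, (hsum.tsum_le_tsum hle (hS.mul_right _)).trans ?_⟩
  rw [tsum_mul_right, ← hSdef, mul_pow]
  gcongr
  calc S ≤ S + 1 := by linarith
    _ ≤ (S + 1) ^ j := le_self_pow₀ (by linarith) (by omega)
end
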